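/- Let N ≥ 2, s ∈ (0,1), and let Ω ⊂ ℝ^N be a bounded Lipschitz domain (the Lipschitz regularity is used only through the extension property: every u ∈ H^s(Ω) is the restriction to Ω of some function in H^s_{Ω,0}). Then for every u ∈ H^s(Ω) there exists a function ũ ∈ H^s_{Ω,0}, unique up to equality a.e. on ℝ^N, such that ũ = u a.e. in Ω, [ũ]_{H^s_{Ω,0}} ≤ [v]_{H^s_{Ω,0}} for every v ∈ H^s_{Ω,0} satisfying v = u a.e. in Ω, and moreover (𝒩_s ũ)(x) = 0 for a.e. x ∈ Ω^c. -/

import Mathlib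

open MeasureTheory Filter Topology Bornology Set
open scoped ENNReal NNReal

noncomputable section

namespace FracNeumann

abbrev Euc (N : ℕ) : Type := EuclideanSpace ℝ (Fin N)

/-- The kernel weight `|x - y| ^ (N + 2s)`. -/
def kern (N : ℕ) (s : ℝ) (x y : Euc N) : ℝ := ‖x - y‖ ^ ((N : ℝ) + 2 * s)

/-- The region `ℝ^{2N} \ (Ω^c × Ω^c)`, where `Ω^c := ℝ^N \ closure Ω`. -/
def reg (N : ℕ) (Ω : Set (Euc N)) : Set (Euc N × Euc N) :=
  {q | q.1 ∈ closure Ω ∨ q.2 ∈ closure Ω}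

/-- The squared seminorm `[u]_{H^s_{Ω,0}}²`, as an extended real number. -/
def semiSq (N : ℕ) (s : ℝ) (Ω : Set (Euc N)) (u : Euc N → ℝ) : ℝ≥0∞ :=
  ∫⁻ q in reg N Ω, ENNReal.ofReal ((u q.1 - u q.2) ^ 2 / kern N s q.1 q.2)

/-- `∫_Ω u²`, as an extended real number. -/
def l2sq (N : ℕ) (Ω : Set (Euc N)) (u : Euc N → ℝ) : ℝ≥0∞ :=
  ∫⁻ x in Ω, ENNReal.ofReal ((u x) ^ 2)

/-- Membership in `H^s_{Ω,0}`. -/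
def memHs (N : ℕ) (s : ℝ) (Ω : Set (Euc N)) (u : Euc N → ℝ) : Prop :=
  Measurable u ∧ l2sq N Ω u < ⊤ ∧ semiSq N s Ω u < ⊤

/-- The squared Gagliardo seminorm `[u]_{H^s(Ω)}²`. -/
def semiSqOn (N : ℕ) (s : ℝ) (Ω : Set (Euc N)) (u : Euc N → ℝ) : ℝ≥0∞ :=
  ∫⁻ q in Ω ×ˢ Ω, ENNReal.ofReal ((u q.1 - u q.2) ^ 2 / kern N s q.1 q.2)

/-- Membership in `H^s(Ω)` (for functions defined on all of `ℝ^N`). -/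
def memHsOn (N : ℕ) (s : ℝ) (Ω : Set (Euc N)) (u : Euc N → ℝ) : Prop :=
  Measurable u ∧ l2sq N Ω u < ⊤ ∧ semiSqOn N s Ω u < ⊤

/-- The normalizing constant `c_{N,s}` of the fractional Laplacian. -/
def cNs (N : ℕ) (s : ℝ) : ℝ :=
  (4 : ℝ) ^ s * s * Real.Gamma ((N : ℝ) / 2 + s) /
    (Real.pi ^ ((N : ℝ) / 2) * Real.Gamma (1 - s))

/-- The nonlocal Neumann derivative `𝒩_s u`. -/
def Nneu (N : ℕ) (s : ℝ) (Ω : Set (Euc N)) (u : Euc N → ℝ) (x : Euc N) : ℝ :=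
  cNs N s * ∫ y in Ω, (u x - u y) / kern N s x y

/-- Membership in `H̃^s_{Ω,0}`: members of `H^s_{Ω,0}` with `𝒩_s u = 0` a.e. in `Ω^c`. -/
def memHsTilde (N : ℕ) (s : ℝ) (Ω : Set (Euc N)) (u : Euc N → ℝ) : Prop :=
  memHs N s Ω u ∧ ∀ᵐ x ∂(volume.restrict (closure Ω)ᶜ), Nneu N s Ω u x = 0

/-- The first nontrivial Neumann eigenvalue `μ₁^{(s)}(Ω)`. -/
def mu1 (N : ℕ) (s : ℝ) (Ω : Set (Euc N)) : ℝ :=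
  sInf {t : ℝ | ∃ u : Euc N → ℝ, memHs N s Ω u ∧ (∫ x in Ω, (u x) ^ 2) = 1 ∧
    (∫ x in Ω, u x) = 0 ∧ t = cNs N s / 2 * (semiSq N s Ω u).toReal}

/-- The bilinear form (without the constant). -/
def bform (N : ℕ) (s : ℝ) (Ω : Set (Euc N)) (u v : Euc N → ℝ) : ℝ :=
  ∫ q in reg N Ω, (u q.1 - u q.2) * (v q.1 - v q.2) / kern N s q.1 q.2

/-- First nontrivial eigenfunction: weak solution associated to `μ₁^{(s)}(Ω)`. -/
def IsFirstEigen (N : ℕ) (s : ℝ) (Ω : Set (Euc N)) (u : Euc N → ℝ) : Prop :=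
  memHs N s Ω u ∧ ¬ (u =ᵐ[volume.restrict Ω] 0) ∧ (∫ x in Ω, u x) = 0 ∧
    ∀ v : Euc N → ℝ, memHs N s Ω v →
      cNs N s / 2 * bform N s Ω u v = mu1 N s Ω * ∫ x in Ω, u x * v x

/-- Reflection `σ_e(x) = x - 2(x·e)e` across the hyperplane `{x·e = 0}`. -/
def reflect (N : ℕ) (e x : Euc N) : Euc N := x - (2 * (inner ℝ x e : ℝ)) • e

/-- The polarization `P_e u` with respect to the hyperplane `{x·e = 0}`. -/
def polarize (N : ℕ) (e : Euc N) (u : Euc N → ℝ) (x : Euc N) : ℝ :=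
  if 0 ≤ (inner ℝ x e : ℝ) then min (u x) (u (reflect N e x))
  else max (u x) (u (reflect N e x))

/-- Foliated Schwarz symmetry with respect to `p`. -/
def FoliatedSchwarz (N : ℕ) (p : Euc N) (u : Euc N → ℝ) : Prop :=
  ∃ uh : ℝ → ℝ → ℝ, (∀ r : ℝ, AntitoneOn (uh r) (Icc 0 Real.pi)) ∧
    ∀ x : Euc N, x ≠ 0 → u x = uh ‖x‖ (Real.arccos ((inner ℝ x p : ℝ) / ‖x‖))

/-- Radial symmetry (pointwise). -/
def Radial (N : ℕ) (u : Euc N → ℝ) : Prop := ∃ f : ℝ → ℝ, ∀ x, u x = f ‖x‖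

/-- Radial symmetry (a.e.). -/
def RadialAE (N : ℕ) (u : Euc N → ℝ) : Prop :=
  ∃ f : ℝ → ℝ, ∀ᵐ x : Euc N ∂volume, u x = f ‖x‖

/-- The set `{x ∈ Ω : u x ≠ 0}` has exactly two connected components. -/
def TwoNodal (N : ℕ) (Ω : Set (Euc N)) (u : Euc N → ℝ) : Prop :=
  Nat.card (ConnectedComponents {x : Euc N // x ∈ Ω ∧ u x ≠ 0}) = 2

/-- Bounded Lipschitz domain: open, bounded, connected, and near every boundary point the set
is the region above the graph of a Lipschitz function in some direction `e`. -/
def IsLipschitzDomain (N : ℕ) (Ω : Set (Euc N)) : Prop :=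
  IsOpen Ω ∧ IsBounded Ω ∧ IsConnected Ω ∧
    ∀ x ∈ frontier Ω, ∃ e : Euc N, ‖e‖ = 1 ∧ ∃ r : ℝ, 0 < r ∧
      ∃ (L : NNReal) (f : Euc N → ℝ), LipschitzWith L f ∧
        ∀ y ∈ Metric.ball x r,
          (y ∈ Ω ↔ f (y - ((inner ℝ y e : ℝ)) • e) < (inner ℝ y e : ℝ))

/-- `g` is a weak gradient of `u` in `Ω`, square-integrable on `Ω`. -/
def IsWeakGradient (N : ℕ) (Ω : Set (Euc N)) (u : Euc N → ℝ) (g : Euc N → Euc N) : Prop :=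
  Measurable g ∧ (∫⁻ x in Ω, ENNReal.ofReal (‖g x‖ ^ 2)) < ⊤ ∧
    ∀ φ : Euc N → ℝ, ContDiff ℝ (⊤ : ℕ∞) φ → HasCompactSupport φ → tsupport φ ⊆ Ω →
      ∀ i : Fin N, (∫ x in Ω, u x * fderiv ℝ φ x (EuclideanSpace.single i 1)) =
        - ∫ x in Ω, g x i * φ x

/-- Membership in `H¹(Ω)`. -/
def memH1 (N : ℕ) (Ω : Set (Euc N)) (u : Euc N → ℝ) : Prop :=
  Measurable u ∧ l2sq N Ω u < ⊤ ∧ ∃ g, IsWeakGradient N Ω u g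

/-- `∫_Ω |∇u|²`, as an extended real number. -/
def gradSq (N : ℕ) (Ω : Set (Euc N)) (u : Euc N → ℝ) : ℝ≥0∞ :=
  ⨅ (g : Euc N → Euc N) (_ : IsWeakGradient N Ω u g), ∫⁻ x in Ω, ENNReal.ofReal (‖g x‖ ^ 2)

/-- Rayleigh quotient for the fractional Neumann problem. -/
def rayleighS (N : ℕ) (s : ℝ) (Ω : Set (Euc N)) (u : Euc N → ℝ) : ℝ≥0∞ :=
  ENNReal.ofReal (cNs N s / 2) * semiSq N s Ω u / l2sq N Ω u

/-- Rayleigh quotient for the local Neumann problem. -/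
def rayleigh1 (N : ℕ) (Ω : Set (Euc N)) (u : Euc N → ℝ) : ℝ≥0∞ :=
  gradSq N Ω u / l2sq N Ω u

/-- The min-max value `μ_n^{(s)}(Ω)` over `n`-dimensional subspaces of `H^s_{Ω,0} ∩ L²₀(Ω)`. -/
def muNs (N : ℕ) (s : ℝ) (Ω : Set (Euc N)) (n : ℕ) : ℝ≥0∞ :=
  ⨅ (A : Submodule ℝ (Euc N → ℝ)) (_ : Module.finrank ℝ A = n ∧
      (∀ u ∈ A, memHs N s Ω u ∧ (∫ x in Ω, u x) = 0) ∧
      (∀ u ∈ A, u =ᵐ[(volume : Measure (Euc N))] 0 → u = 0)),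
    ⨆ (u : Euc N → ℝ) (_ : u ∈ A ∧ u ≠ 0), rayleighS N s Ω u

/-- The min-max value over `n`-dimensional subspaces of `H̃^s_{Ω,0} ∩ L²₀(Ω)`. -/
def muNsTilde (N : ℕ) (s : ℝ) (Ω : Set (Euc N)) (n : ℕ) : ℝ≥0∞ :=
  ⨅ (A : Submodule ℝ (Euc N → ℝ)) (_ : Module.finrank ℝ A = n ∧
      (∀ u ∈ A, memHsTilde N s Ω u ∧ (∫ x in Ω, u x) = 0) ∧
      (∀ u ∈ A, u =ᵐ[(volume : Measure (Euc N))] 0 → u = 0)),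
    ⨆ (u : Euc N → ℝ) (_ : u ∈ A ∧ u ≠ 0), rayleighS N s Ω u

/-- The min-max value `μ_n^{(1)}(Ω)` over `n`-dimensional subspaces of `H¹(Ω) ∩ L²₀(Ω)`. -/
def muN1 (N : ℕ) (Ω : Set (Euc N)) (n : ℕ) : ℝ≥0∞ :=
  ⨅ (A : Submodule ℝ (Euc N → ℝ)) (_ : Module.finrank ℝ A = n ∧
      (∀ u ∈ A, memH1 N Ω u ∧ (∫ x in Ω, u x) = 0) ∧
      (∀ u ∈ A, u =ᵐ[volume.restrict Ω] 0 → u = 0)),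
    ⨆ (u : Euc N → ℝ) (_ : u ∈ A ∧ u ≠ 0), rayleigh1 N Ω u

/-- `μ_n^{(s)}(Ω)` including `μ₀^{(s)}(Ω) := 0`. -/
def muNsFull (N : ℕ) (s : ℝ) (Ω : Set (Euc N)) (n : ℕ) : ℝ≥0∞ :=
  if n = 0 then 0 else muNs N s Ω n

/-- `μ_n^{(1)}(Ω)` including `μ₀^{(1)}(Ω) := 0`. -/
def muN1Full (N : ℕ) (Ω : Set (Euc N)) (n : ℕ) : ℝ≥0∞ :=
  if n = 0 then 0 else muN1 N Ω n

/-- The squared `H^s_{Ω,0}`-seminorm of the `s`-minimal extension of `u`: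
the minimal value of `[v]²` over `v ∈ H^s_{Ω,0}` with `v = u` a.e. in `Ω`. -/
def minExtSemiSq (N : ℕ) (s : ℝ) (Ω : Set (Euc N)) (u : Euc N → ℝ) : ℝ≥0∞ :=
  ⨅ (v : Euc N → ℝ) (_ : memHs N s Ω v ∧ v =ᵐ[volume.restrict Ω] u), semiSq N s Ω v

/-- `ω_{N-1}`: volume of the unit ball of `ℝ^{N-1}`. -/
def omegaPrev (N : ℕ) : ℝ := (volume (Metric.ball (0 : Euc (N - 1)) 1)).toReal

/-- Membership in `L²₀(Ω)`. -/
def memL20 (N : ℕ) (Ω : Set (Euc N)) (u : Euc N → ℝ) : Prop :=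
  Measurable u ∧ l2sq N Ω u < ⊤ ∧ (∫ x in Ω, u x) = 0

/-- The functional `F_s` (value `+∞` outside `H^s(Ω)`). -/
def Fs (N : ℕ) (s : ℝ) (Ω : Set (Euc N)) (u : Euc N → ℝ) : ℝ≥0∞ :=
  ENNReal.ofReal (1 - s) * minExtSemiSq N s Ω u

/-- The functional `F₁` (value `+∞` outside `H¹(Ω)`). -/
def F1 (N : ℕ) (Ω : Set (Euc N)) (u : Euc N → ℝ) : ℝ≥0∞ :=
  ENNReal.ofReal (omegaPrev N / (2 * N)) * gradSq N Ω u

end FracNeumann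
namespace FracNeumann

/-!
`[u]²` is the squared norm of the difference `u x - u y` in `L²` of the measure
`|x - y| ^ (-(N + 2s)) dx dy`. The differences of functions vanishing on `Ω` form a closed subspace,
and subtracting from an extension `U` of `u` its projection onto that subspace gives the minimal
extension: Pythagoras' identity yields both minimality and uniqueness, because a function that
vanishes on `Ω` and has no increments is zero.

Testing orthogonality with indicators of sets at positive distance from `Ω` shows that the integral
of `(ũ x - ũ y) / |x - y| ^ (N + 2s)` over `y` in the closure of `Ω` vanishes for almost every
exterior `x`. The closure can be replaced by `Ω` since the extension property forces the frontier to
be null. Indeed, by the open mapping theorem extensions exist with a uniform bound. A cutoff around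
a point where `Ω` is sparse has a small norm in `H^s(Ω)`, hence an extension of small seminorm; this
is impossible if `Ω` has comparable masses where the cutoff is `1` and where it is `0`, so the mass
of `Ω` in a ball grows slowly with the radius as long as `Ω` is sparse. Almost every point of the
frontier has density zero, and at such a point slow growth over all small scales contradicts the
positive mass of `Ω` in a ball of fixed size.
-/

section Preliminaries

variable {α : Type*} [MeasurableSpace α] {μ : Measure α} {f g : α → ℝ}

lemma eLpNorm_two_sq (f : α → ℝ) (μ : Measure α) :
    eLpNorm f 2 μ ^ 2 = ∫⁻ x, ENNReal.ofReal (f x ^ 2) ∂μ := by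
  have h := eLpNorm_nnreal_pow_eq_lintegral (p := 2) (f := f) (μ := μ) two_ne_zero
  rw [show ((2 : ℝ≥0) : ℝ) = ((2 : ℕ) : ℝ) by norm_num] at h
  simp only [ENNReal.rpow_natCast] at h
  exact h.trans (lintegral_congr fun x => by
    rw [← sq_abs, ENNReal.ofReal_pow (abs_nonneg _), Real.enorm_eq_ofReal_abs])

lemma memLp_two_iff_lintegral_sq_lt_top (hf : AEStronglyMeasurable f μ) :
    MemLp f 2 μ ↔ ∫⁻ x, ENNReal.ofReal (f x ^ 2) ∂μ < ⊤ := by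
  rw [← eLpNorm_two_sq, ENNReal.pow_lt_top_iff]
  simp [MemLp, hf]

lemma eLpNorm_add_sq_of_integral_mul_eq_zero (hf : MemLp f 2 μ) (hg : MemLp g 2 μ)
    (hfg : ∫ x, f x * g x ∂μ = 0) :
    eLpNorm (f + g) 2 μ ^ 2 = eLpNorm f 2 μ ^ 2 + eLpNorm g 2 μ ^ 2 := by
  have integral_form : ∀ {h : α → ℝ}, MemLp h 2 μ →
      eLpNorm h 2 μ ^ 2 = ENNReal.ofReal (∫ x, h x ^ 2 ∂μ) := fun hh => by
    rw [eLpNorm_two_sq, ofReal_integral_eq_lintegral_ofReal hh.integrable_sq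
      (Eventually.of_forall fun _ => sq_nonneg _)]
  rw [integral_form (hf.add hg), integral_form hf, integral_form hg,
    ← ENNReal.ofReal_add (integral_nonneg fun _ => sq_nonneg _)
      (integral_nonneg fun _ => sq_nonneg _)]
  congr 1
  have expand : ∀ x, (f + g) x ^ 2 = f x ^ 2 + 2 * (f x * g x) + g x ^ 2 := fun x => by
    simp only [Pi.add_apply]; ring
  have hmul : Integrable (fun x => 2 * (f x * g x)) μ := (hf.integrable_mul hg).const_mul 2
  have hadd : Integrable (fun x => f x ^ 2 + 2 * (f x * g x)) μ := hf.integrable_sq.add hmul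
  simp_rw [expand]
  rw [integral_add hadd hg.integrable_sq, integral_add hf.integrable_sq hmul, integral_const_mul,
    hfg, mul_zero, add_zero]

lemma ofReal_norm_sq_of_ae_eq {F : Lp ℝ 2 μ} (h : F =ᵐ[μ] f) :
    ENNReal.ofReal (‖F‖ ^ 2) = eLpNorm f 2 μ ^ 2 := by
  rw [← eLpNorm_congr_ae h, Lp.norm_def, ENNReal.ofReal_pow ENNReal.toReal_nonneg,
    ENNReal.ofReal_toReal (Lp.eLpNorm_ne_top F)]

lemma norm_prodMk_sq_le {E F : Type*} [SeminormedAddCommGroup E] [SeminormedAddCommGroup F]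
    (a : E) (b : F) : ‖(a, b)‖ ^ 2 ≤ ‖a‖ ^ 2 + ‖b‖ ^ 2 := by
  rw [Prod.norm_mk]
  rcases max_choice ‖a‖ ‖b‖ with h | h <;> rw [h] <;>
    linarith [sq_nonneg ‖a‖, sq_nonneg ‖b‖]

end Preliminaries

section DifferenceOperator

variable {X : Type*}

/-- The difference operator `u ↦ ((x, y) ↦ u x - u y)`; a nonlocal seminorm is an `L²` norm of
`pairDiff u`. -/
def pairDiff : (X → ℝ) →ₗ[ℝ] (X × X → ℝ) where
  toFun u q := u q.1 - u q.2
  map_add' u v := by ext q; simp only [Pi.add_apply]; ring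
  map_smul' c u := by
    ext q; simp only [Pi.smul_apply, smul_eq_mul, RingHom.id_apply]; ring

@[simp]
lemma pairDiff_apply (u : X → ℝ) (q : X × X) : pairDiff u q = u q.1 - u q.2 := rfl

variable [MeasurableSpace X] {τ μ : Measure X} {ν : Measure (X × X)} {S : Set (X × X)}

lemma measurable_pairDiff {u : X → ℝ} (hu : Measurable u) : Measurable (pairDiff u) :=
  (hu.comp measurable_fst).sub (hu.comp measurable_snd)

/-- The null sets of `ν` are compatible with those of `τ` (the measure on the whole space) and of
`μ` (the measure on the domain): `ν` sees almost all pairs with one point in the domain and the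
other anywhere, and its marginals are absolutely continuous. -/
structure DiffCompatible (τ μ : Measure X) (ν : Measure (X × X)) : Prop where
  prod_ac : μ.prod τ ≪ ν
  fst_qmp : Measure.QuasiMeasurePreserving Prod.fst ν τ
  snd_qmp : Measure.QuasiMeasurePreserving Prod.snd ν τ
  base_ac : μ ≪ τ

namespace DiffCompatible

lemma pairDiff_congr_ae (h : DiffCompatible τ μ ν) {u v : X → ℝ} (huv : u =ᵐ[τ] v) :
    pairDiff u =ᵐ[ν] pairDiff v := by
  filter_upwards [h.fst_qmp.ae huv, h.snd_qmp.ae huv] with q h₁ h₂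
  rw [pairDiff_apply, pairDiff_apply, h₁, h₂]

lemma exists_base_point [SFinite τ] [NeZero μ] (h : DiffCompatible τ μ ν) {P : X → Prop}
    {p : X × X → Prop} (hP : ∀ᵐ y ∂μ, P y) (hp : ∀ᵐ q ∂ν, p q) :
    ∃ y, P y ∧ ∀ᵐ x ∂τ, p (y, x) :=
  (hP.and (Measure.ae_ae_of_ae_prod (h.prod_ac.ae_le hp))).exists

lemma ae_eq_of_pairDiff_ae_eq [SFinite τ] [NeZero μ] (h : DiffCompatible τ μ ν) {u v : X → ℝ}
    (huv : u =ᵐ[μ] v) (hd : pairDiff u =ᵐ[ν] pairDiff v) : u =ᵐ[τ] v := by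
  obtain ⟨y, hy, hxy⟩ := h.exists_base_point huv hd
  filter_upwards [hxy] with x hx
  simp only [pairDiff_apply] at hx
  linarith

lemma exists_limit_of_tendsto_ae [SFinite τ] [NeZero μ] (h : DiffCompatible τ μ ν)
    {u : ℕ → X → ℝ} (hu : ∀ n, Measurable (u n)) {f : X → ℝ} {g : X × X → ℝ}
    (hf : ∀ᵐ x ∂μ, Tendsto (fun n => u n x) atTop (𝓝 (f x)))
    (hg : ∀ᵐ q ∂ν, Tendsto (fun n => pairDiff (u n) q) atTop (𝓝 (g q))) :
    ∃ v : X → ℝ, Measurable v ∧ f =ᵐ[μ] v ∧ g =ᵐ[ν] pairDiff v := by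
  obtain ⟨y, hy, hxy⟩ := h.exists_base_point hf hg
  have hconv : ∀ᵐ x ∂τ, ∃ l, Tendsto (fun n => u n x) atTop (𝓝 l) := by
    filter_upwards [hxy] with x hx
    exact ⟨_, (hy.sub hx).congr fun n => by simp only [pairDiff_apply, sub_sub_cancel]⟩
  obtain ⟨v, hv, hlim⟩ :=
    measurable_limit_of_tendsto_metrizable_ae (fun n => (hu n).aemeasurable) hconv
  refine ⟨v, hv, ?_, ?_⟩
  · filter_upwards [hf, h.base_ac.ae_le hlim] with x h₁ h₂ using tendsto_nhds_unique h₁ h₂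
  · filter_upwards [hg, h.fst_qmp.ae hlim, h.snd_qmp.ae hlim] with q hq h₁ h₂ using
      tendsto_nhds_unique hq (h₁.sub h₂)

end DiffCompatible

/-- The graph of `pairDiff` as an operator from `L²(μ)` to `L²(ν)`. It may be multivalued: `μ` only
sees the domain, and the values of `u` off the domain are recorded by `pairDiff u` alone. -/
def diffGraph (μ : Measure X) (ν : Measure (X × X)) : Submodule ℝ (Lp ℝ 2 μ × Lp ℝ 2 ν) where
  carrier := {p | ∃ u : X → ℝ, Measurable u ∧ p.1 =ᵐ[μ] u ∧ p.2 =ᵐ[ν] pairDiff u}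
  add_mem' := by
    rintro p q ⟨u, hu, hp₁, hp₂⟩ ⟨v, hv, hq₁, hq₂⟩
    refine ⟨u + v, hu.add hv, (Lp.coeFn_add _ _).trans (hp₁.add hq₁), ?_⟩
    rw [map_add]
    exact (Lp.coeFn_add _ _).trans (hp₂.add hq₂)
  zero_mem' := by
    refine ⟨0, measurable_zero, Lp.coeFn_zero _ _ _, ?_⟩
    rw [map_zero]
    exact Lp.coeFn_zero _ _ _
  smul_mem' := by
    rintro c p ⟨u, hu, hp₁, hp₂⟩
    refine ⟨c • u, hu.const_smul c, (Lp.coeFn_smul _ _).trans (hp₁.const_smul c), ?_⟩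
    rw [map_smul]
    exact (Lp.coeFn_smul _ _).trans (hp₂.const_smul c)

lemma toLp_mem_diffGraph {u : X → ℝ} (hu : Measurable u) (hL : MemLp u 2 μ)
    (hd : MemLp (pairDiff u) 2 ν) : (hL.toLp u, hd.toLp (pairDiff u)) ∈ diffGraph μ ν :=
  ⟨u, hu, hL.coeFn_toLp, hd.coeFn_toLp⟩

lemma isClosed_diffGraph [SFinite τ] [NeZero μ] (h : DiffCompatible τ μ ν) :
    IsClosed (diffGraph μ ν : Set (Lp ℝ 2 μ × Lp ℝ 2 ν)) := by
  rw [← isSeqClosed_iff_isClosed]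
  intro p p₀ hp hlim
  choose u hu h₁ h₂ using hp
  have hlim₁ : Tendsto (fun n => (p n).1) atTop (𝓝 p₀.1) := (continuous_fst.tendsto _).comp hlim
  have hlim₂ : Tendsto (fun n => (p n).2) atTop (𝓝 p₀.2) := (continuous_snd.tendsto _).comp hlim
  obtain ⟨a, ha, hae₁⟩ := (tendstoInMeasure_of_tendsto_Lp hlim₁).exists_seq_tendsto_ae
  obtain ⟨b, hb, hae₂⟩ := (tendstoInMeasure_of_tendsto_Lp
    (hlim₂.comp ha.tendsto_atTop)).exists_seq_tendsto_ae
  refine h.exists_limit_of_tendsto_ae (u := fun n => u (a (b n))) (fun n => hu _) ?_ ?_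
  · filter_upwards [hae₁, ae_all_iff.2 h₁] with x hx hux
    exact (hx.comp hb.tendsto_atTop).congr fun n => hux _
  · filter_upwards [hae₂, ae_all_iff.2 h₂] with q hq huq
    exact hq.congr fun n => huq _

/-- The weak Euler–Lagrange equation off the domain carrying `μ`: `pairDiff u` is orthogonal to
the differences of all finite-energy functions vanishing on the domain. -/
def IsHarmonicOff (μ : Measure X) (ν : Measure (X × X)) (u : X → ℝ) : Prop :=
  ∀ ψ : X → ℝ, Measurable ψ → ψ =ᵐ[μ] 0 → MemLp (pairDiff ψ) 2 ν →
    ∫ q, pairDiff u q * pairDiff ψ q ∂ν = 0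

theorem exists_isHarmonicOff [SFinite τ] [NeZero μ] (h : DiffCompatible τ μ ν) {u : X → ℝ}
    (hu : Measurable u) (hdu : MemLp (pairDiff u) 2 ν) :
    ∃ v : X → ℝ, Measurable v ∧ v =ᵐ[μ] u ∧ MemLp (pairDiff v) 2 ν ∧ IsHarmonicOff μ ν v := by
  let K : Submodule ℝ (Lp ℝ 2 ν) := (diffGraph μ ν).comap (LinearMap.inr ℝ (Lp ℝ 2 μ) (Lp ℝ 2 ν))
  have hK : IsClosed (K : Set (Lp ℝ 2 ν)) :=
    (isClosed_diffGraph h).preimage (Continuous.prodMk_right 0)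
  have : CompleteSpace K := hK.completeSpace_coe
  obtain ⟨φ, hφ, hφ₀, hPφ⟩ : K.starProjection (hdu.toLp _) ∈ K :=
    K.starProjection_apply_mem _
  have hφμ : φ =ᵐ[μ] 0 := hφ₀.symm.trans (Lp.coeFn_zero _ _ _)
  have hdφ : MemLp (pairDiff φ) 2 ν := (memLp_congr_ae hPφ).1 (Lp.memLp _)
  have hv : (hdu.toLp _ - K.starProjection (hdu.toLp _) : Lp ℝ 2 ν) =ᵐ[ν] pairDiff (u - φ) := by
    rw [map_sub]
    exact (Lp.coeFn_sub _ _).trans (hdu.coeFn_toLp.sub hPφ)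
  refine ⟨u - φ, hu.sub hφ, ?_, ?_, fun ψ hψ hψμ hdψ => ?_⟩
  · filter_upwards [hφμ] with x hx
    simp [hx]
  · rw [map_sub]
    exact hdu.sub hdφ
  · have hmem : hdψ.toLp (pairDiff ψ) ∈ K :=
      ⟨ψ, hψ, (Lp.coeFn_zero _ _ _).trans hψμ.symm, hdψ.coeFn_toLp⟩
    rw [← K.starProjection_inner_eq_zero (hdu.toLp _) _ hmem, L2.inner_def]
    refine integral_congr_ae ?_
    filter_upwards [hv, hdψ.coeFn_toLp] with q h₁ h₂
    rw [h₁, h₂, real_inner_comm]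
    rfl

lemma IsHarmonicOff.eLpNorm_pairDiff_sq {u v : X → ℝ} (h : IsHarmonicOff μ ν u)
    (hu : Measurable u) (hv : Measurable v) (hdu : MemLp (pairDiff u) 2 ν)
    (hdv : MemLp (pairDiff v) 2 ν) (huv : v =ᵐ[μ] u) :
    eLpNorm (pairDiff v) 2 ν ^ 2 =
      eLpNorm (pairDiff u) 2 ν ^ 2 + eLpNorm (pairDiff (v - u)) 2 ν ^ 2 := by
  have hd : MemLp (pairDiff (v - u)) 2 ν := by
    rw [map_sub]
    exact hdv.sub hdu
  have hzero : v - u =ᵐ[μ] 0 := by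
    filter_upwards [huv] with x hx
    simp [hx]
  rw [← eLpNorm_add_sq_of_integral_mul_eq_zero hdu hd (h _ (hv.sub hu) hzero hd), ← map_add,
    add_sub_cancel]

/-- Restriction of the difference part of `diffGraph μ ν` to the set of pairs `S`. -/
def diffGraphRestrict (μ : Measure X) (ν : Measure (X × X)) (S : Set (X × X)) :
    diffGraph μ ν →L[ℝ] diffGraph μ (ν.restrict S) :=
  (((ContinuousLinearMap.fst ℝ _ _).prod ((LpToLpRestrictCLM _ ℝ ℝ ν 2 S).comp
    (ContinuousLinearMap.snd ℝ _ _))).comp (diffGraph μ ν).subtypeL).codRestrict _ <| by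
      rintro ⟨p, u, hu, h₁, h₂⟩
      exact ⟨u, hu, h₁, (LpToLpRestrictCLM_coeFn ℝ S p.2).trans (ae_restrict_of_ae h₂)⟩

/-- By the open mapping theorem, solvability of the extension problem is quantitative. -/
theorem exists_extension_bound [SFinite τ] [SFinite μ] [NeZero μ] (h : DiffCompatible τ μ ν)
    (hS : DiffCompatible μ μ (ν.restrict S))
    (hext : ∀ u : X → ℝ, Measurable u → MemLp u 2 μ → MemLp (pairDiff u) 2 (ν.restrict S) →
      ∃ U : X → ℝ, Measurable U ∧ MemLp (pairDiff U) 2 ν ∧ U =ᵐ[μ] u) :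
    ∃ C : ℝ≥0, ∀ u : X → ℝ, Measurable u → MemLp u 2 μ →
      MemLp (pairDiff u) 2 (ν.restrict S) → ∃ U : X → ℝ, Measurable U ∧ U =ᵐ[μ] u ∧
        eLpNorm (pairDiff U) 2 ν ^ 2 ≤
          C * (eLpNorm u 2 μ ^ 2 + eLpNorm (pairDiff u) 2 (ν.restrict S) ^ 2) := by
  have : CompleteSpace (diffGraph μ ν) := (isClosed_diffGraph h).completeSpace_coe
  have : CompleteSpace (diffGraph μ (ν.restrict S)) := (isClosed_diffGraph hS).completeSpace_coe
  have hsurj : Function.Surjective (diffGraphRestrict μ ν S) := by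
    rintro ⟨p, u, hu, h₁, h₂⟩
    have hL : MemLp u 2 μ := (memLp_congr_ae h₁).1 (Lp.memLp _)
    obtain ⟨U, hU, hdU, hUu⟩ := hext u hu hL ((memLp_congr_ae h₂).1 (Lp.memLp _))
    have hLU : MemLp U 2 μ := (memLp_congr_ae hUu).2 hL
    have hrestrict : LpToLpRestrictCLM _ ℝ ℝ ν 2 S (hdU.toLp (pairDiff U)) =ᵐ[ν.restrict S]
        pairDiff u :=
      (LpToLpRestrictCLM_coeFn ℝ S _).trans
        (hdU.coeFn_toLp.restrict.trans (hS.pairDiff_congr_ae hUu))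
    exact ⟨⟨_, toLp_mem_diffGraph hU hLU hdU⟩, Subtype.ext (Prod.ext
      (Lp.ext (hLU.coeFn_toLp.trans (hUu.trans h₁.symm))) (Lp.ext (hrestrict.trans h₂.symm)))⟩
  obtain ⟨C, hC, hbound⟩ := (diffGraphRestrict μ ν S).exists_preimage_norm_le hsurj
  refine ⟨(C ^ 2).toNNReal, fun u hu hL hd => ?_⟩
  obtain ⟨⟨p, U, hU, h₁, h₂⟩, hp, hnorm⟩ := hbound ⟨_, toLp_mem_diffGraph hu hL hd⟩
  have hp₁ : p.1 = hL.toLp u := congrArg (fun q => q.1.1) hp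
  refine ⟨U, hU, h₁.symm.trans (hp₁ ▸ hL.coeFn_toLp), ?_⟩
  rw [← ofReal_norm_sq_of_ae_eq h₂, ← ofReal_norm_sq_of_ae_eq hL.coeFn_toLp,
    ← ofReal_norm_sq_of_ae_eq hd.coeFn_toLp, ← ENNReal.ofReal_add (sq_nonneg _) (sq_nonneg _),
    ← ENNReal.ofReal, ← ENNReal.ofReal_mul (sq_nonneg C)]
  refine ENNReal.ofReal_le_ofReal ?_
  calc ‖p.2‖ ^ 2 ≤ (C * ‖(hL.toLp u, hd.toLp (pairDiff u))‖) ^ 2 := by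
        gcongr
        exact (norm_snd_le p).trans hnorm
    _ ≤ C ^ 2 * (‖hL.toLp u‖ ^ 2 + ‖hd.toLp (pairDiff u)‖ ^ 2) := by
        rw [mul_pow]
        gcongr
        exact norm_prodMk_sq_le _ _

end DifferenceOperator

section KernelMeasure

variable {N : ℕ} {s : ℝ}

lemma kern_nonneg (x y : Euc N) : 0 ≤ kern N s x y :=
  Real.rpow_nonneg (norm_nonneg _) _

lemma kern_pos {x y : Euc N} (h : x ≠ y) : 0 < kern N s x y :=
  Real.rpow_pos_of_pos (norm_sub_pos_iff.2 h) _

lemma kern_comm (x y : Euc N) : kern N s x y = kern N s y x := by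
  rw [kern, kern, norm_sub_rev]

lemma measurable_kern : Measurable fun q : Euc N × Euc N => kern N s q.1 q.2 :=
  (measurable_fst.sub measurable_snd).norm.pow_const _

lemma measurable_ofReal_inv_kern :
    Measurable fun q : Euc N × Euc N => ENNReal.ofReal (kern N s q.1 q.2)⁻¹ :=
  measurable_kern.inv.ennreal_ofReal

/-- The measure `|x - y| ^ (-(N + 2s)) dx dy`. -/
def kernMeasure (N : ℕ) (s : ℝ) : Measure (Euc N × Euc N) :=
  volume.withDensity fun q => ENNReal.ofReal (kern N s q.1 q.2)⁻¹

lemma setLIntegral_kernMeasure (D : Set (Euc N × Euc N)) (f : Euc N × Euc N → ℝ≥0∞) :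
    ∫⁻ q in D, f q ∂kernMeasure N s =
      ∫⁻ q in D, ENNReal.ofReal (kern N s q.1 q.2)⁻¹ * f q := by
  rw [kernMeasure, restrict_withDensity', lintegral_withDensity_eq_lintegral_mul_non_measurable _
    measurable_ofReal_inv_kern (Eventually.of_forall fun _ => ENNReal.ofReal_lt_top)]
  rfl

lemma setLIntegral_sq_div_kern (D : Set (Euc N × Euc N)) (u : Euc N → ℝ) :
    ∫⁻ q in D, ENNReal.ofReal ((u q.1 - u q.2) ^ 2 / kern N s q.1 q.2) =
      eLpNorm (pairDiff u) 2 ((kernMeasure N s).restrict D) ^ 2 := by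
  rw [eLpNorm_two_sq, setLIntegral_kernMeasure]
  refine lintegral_congr fun q => ?_
  rw [div_eq_inv_mul, ENNReal.ofReal_mul (inv_nonneg.2 (kern_nonneg _ _)), pairDiff_apply]

lemma setIntegral_kernMeasure {D : Set (Euc N × Euc N)} (hD : MeasurableSet D)
    (f : Euc N × Euc N → ℝ) :
    ∫ q in D, f q ∂kernMeasure N s = ∫ q in D, f q / kern N s q.1 q.2 := by
  rw [kernMeasure, setIntegral_withDensity_eq_setIntegral_toReal_smul
    measurable_ofReal_inv_kern (Eventually.of_forall fun _ => ENNReal.ofReal_lt_top) _ hD]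
  refine integral_congr_ae (Eventually.of_forall fun q => ?_)
  simp only [ENNReal.toReal_ofReal (inv_nonneg.2 (kern_nonneg _ _)), smul_eq_mul]
  rw [div_eq_inv_mul]

lemma integrableOn_kernMeasure_iff {D : Set (Euc N × Euc N)} {f : Euc N × Euc N → ℝ} :
    IntegrableOn f D (kernMeasure N s) ↔ IntegrableOn (fun q => f q / kern N s q.1 q.2) D := by
  rw [IntegrableOn, kernMeasure, restrict_withDensity', integrable_withDensity_iff_integrable_smul'
    measurable_ofReal_inv_kern (Eventually.of_forall fun _ => ENNReal.ofReal_lt_top), IntegrableOn]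
  refine integrable_congr (Eventually.of_forall fun q => ?_)
  simp only [ENNReal.toReal_ofReal (inv_nonneg.2 (kern_nonneg _ _)), smul_eq_mul]
  rw [div_eq_inv_mul]

lemma kernMeasure_absolutelyContinuous : kernMeasure N s ≪ volume :=
  withDensity_absolutelyContinuous _ _

lemma volume_absolutelyContinuous_kernMeasure [NeZero N] : volume ≪ kernMeasure N s := by
  refine withDensity_absolutelyContinuous' measurable_ofReal_inv_kern.aemeasurable ?_
  have hdiag : ∀ᵐ q : Euc N × Euc N, q.1 ≠ q.2 := by
    rw [Measure.volume_eq_prod]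
    refine (Measure.ae_prod_iff_ae_ae (measurableSet_eq_fun measurable_fst measurable_snd).compl).2
      (Eventually.of_forall fun x => ?_)
    filter_upwards [Measure.ae_ne volume x] with y hy using hy.symm
  filter_upwards [hdiag] with q hq
  simpa using kern_pos hq

lemma diffCompatible_kernMeasure [NeZero N] {T Ω : Set (Euc N)} {D : Set (Euc N × Euc N)}
    (hΩ : Ω ⊆ T) (hD : Ω ×ˢ T ⊆ D) (hDT : D ⊆ T ×ˢ T) :
    DiffCompatible (volume.restrict T) (volume.restrict Ω) ((kernMeasure N s).restrict D) := by
  have hac : (kernMeasure N s).restrict D ≪ (volume.restrict T).prod (volume.restrict T) := by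
    rw [Measure.prod_restrict, ← Measure.volume_eq_prod]
    exact (kernMeasure_absolutelyContinuous.restrict D).trans
      (Measure.restrict_mono hDT le_rfl).absolutelyContinuous
  refine ⟨?_, Measure.quasiMeasurePreserving_fst.mono_left hac,
    Measure.quasiMeasurePreserving_snd.mono_left hac,
    (Measure.restrict_mono hΩ le_rfl).absolutelyContinuous⟩
  rw [Measure.prod_restrict, ← Measure.volume_eq_prod]
  exact (Measure.restrict_mono hD le_rfl).absolutelyContinuous.trans
    (volume_absolutelyContinuous_kernMeasure.restrict D)

end KernelMeasure

section FractionalSobolevSpaces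

variable {N : ℕ} {s : ℝ} {Ω : Set (Euc N)} {u : Euc N → ℝ}

lemma measurableSet_reg (Ω : Set (Euc N)) : MeasurableSet (reg N Ω) :=
  (measurable_fst isClosed_closure.measurableSet).union
    (measurable_snd isClosed_closure.measurableSet)

lemma prod_subset_reg (Ω : Set (Euc N)) : Ω ×ˢ Ω ⊆ reg N Ω :=
  fun _ hq => Or.inl (subset_closure hq.1)

lemma diffCompatible_reg [NeZero N] :
    DiffCompatible volume (volume.restrict Ω) ((kernMeasure N s).restrict (reg N Ω)) := by
  have hprod : Ω ×ˢ univ ⊆ reg N Ω := fun _ hq => Or.inl (subset_closure hq.1)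
  simpa using diffCompatible_kernMeasure (s := s) (subset_univ Ω) hprod (by simp)

lemma diffCompatible_prod [NeZero N] :
    DiffCompatible (volume.restrict Ω) (volume.restrict Ω)
      ((kernMeasure N s).restrict (Ω ×ˢ Ω)) :=
  diffCompatible_kernMeasure subset_rfl subset_rfl subset_rfl

lemma semiSq_eq_eLpNorm_sq :
    semiSq N s Ω u = eLpNorm (pairDiff u) 2 ((kernMeasure N s).restrict (reg N Ω)) ^ 2 :=
  setLIntegral_sq_div_kern _ u

lemma semiSqOn_eq_eLpNorm_sq :
    semiSqOn N s Ω u = eLpNorm (pairDiff u) 2 ((kernMeasure N s).restrict (Ω ×ˢ Ω)) ^ 2 :=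
  setLIntegral_sq_div_kern _ u

lemma l2sq_eq_eLpNorm_sq : l2sq N Ω u = eLpNorm u 2 (volume.restrict Ω) ^ 2 :=
  (eLpNorm_two_sq _ _).symm

lemma memHs_iff : memHs N s Ω u ↔ Measurable u ∧ MemLp u 2 (volume.restrict Ω) ∧
    MemLp (pairDiff u) 2 ((kernMeasure N s).restrict (reg N Ω)) := by
  refine and_congr_right fun hu => ?_
  rw [semiSq_eq_eLpNorm_sq, eLpNorm_two_sq, l2sq,
    memLp_two_iff_lintegral_sq_lt_top hu.aestronglyMeasurable,
    memLp_two_iff_lintegral_sq_lt_top (measurable_pairDiff hu).aestronglyMeasurable]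

lemma memHsOn_iff : memHsOn N s Ω u ↔ Measurable u ∧ MemLp u 2 (volume.restrict Ω) ∧
    MemLp (pairDiff u) 2 ((kernMeasure N s).restrict (Ω ×ˢ Ω)) := by
  refine and_congr_right fun hu => ?_
  rw [semiSqOn_eq_eLpNorm_sq, eLpNorm_two_sq, l2sq,
    memLp_two_iff_lintegral_sq_lt_top hu.aestronglyMeasurable,
    memLp_two_iff_lintegral_sq_lt_top (measurable_pairDiff hu).aestronglyMeasurable]

/-- Every function in `H^s(Ω)` is the restriction to `Ω` of a function in `H^s_{Ω,0}`. -/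
def HasExtensionProperty (N : ℕ) (s : ℝ) (Ω : Set (Euc N)) : Prop :=
  ∀ u : Euc N → ℝ, memHsOn N s Ω u →
    ∃ U : Euc N → ℝ, memHs N s Ω U ∧ U =ᵐ[volume.restrict Ω] u

lemma HasExtensionProperty.exists_bound [NeZero N] (hext : HasExtensionProperty N s Ω)
    (hΩ : volume Ω ≠ 0) :
    ∃ C : ℝ≥0, ∀ u : Euc N → ℝ, memHsOn N s Ω u → ∃ U : Euc N → ℝ, Measurable U ∧
      U =ᵐ[volume.restrict Ω] u ∧ semiSq N s Ω U ≤ C * (l2sq N Ω u + semiSqOn N s Ω u) := by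
  have : NeZero (volume.restrict Ω) := ⟨by rwa [Ne, Measure.restrict_eq_zero]⟩
  have hprod : ((kernMeasure N s).restrict (reg N Ω)).restrict (Ω ×ˢ Ω) =
      (kernMeasure N s).restrict (Ω ×ˢ Ω) :=
    Measure.restrict_restrict_of_subset (prod_subset_reg Ω)
  obtain ⟨C, hC⟩ := exists_extension_bound (S := Ω ×ˢ Ω) (diffCompatible_reg (s := s))
    (hprod ▸ diffCompatible_prod) fun u hu hL hd => by
      obtain ⟨U, hU, hUu⟩ := hext u (memHsOn_iff.2 ⟨hu, hL, hprod ▸ hd⟩)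
      exact ⟨U, hU.1, (memHs_iff.1 hU).2.2, hUu⟩
  refine ⟨C, fun u hu => ?_⟩
  obtain ⟨hu, hL, hd⟩ := memHsOn_iff.1 hu
  simpa only [semiSq_eq_eLpNorm_sq, semiSqOn_eq_eLpNorm_sq, l2sq_eq_eLpNorm_sq, hprod] using
    hC u hu hL (hprod.symm ▸ hd)

end FractionalSobolevSpaces

section SparseSets

lemma setLIntegral_le_of_kernel_bound {E : Type*} [MeasurableSpace E] {μ : Measure E} [SFinite μ]
    {g : E × E → ℝ≥0∞} (hg : Measurable g) (hsymm : ∀ q, g q.swap = g q) {S B : Set E}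
    (hB : MeasurableSet B) {D : Set (E × E)} (hD : D ⊆ S ×ˢ S)
    {f : E × E → ℝ≥0∞} (hfg : ∀ q ∈ D, f q ≤ g q)
    (hf₀ : ∀ q ∈ D, q.1 ∉ B → q.2 ∉ B → f q = 0) {M : ℝ≥0∞}
    (hM : ∀ y ∈ B, ∫⁻ z in S, g (y, z) ∂μ ≤ M) :
    ∫⁻ q in D, f q ∂μ.prod μ ≤ 2 * (M * μ (S ∩ B)) := by
  let G : E × E → ℝ≥0∞ := (B ×ˢ univ).indicator g
  have hG : Measurable G := hg.indicator (hB.prod MeasurableSet.univ)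
  have hfG : ∀ q ∈ D, f q ≤ G q + G q.swap := by
    intro q hq
    by_cases h₁ : q.1 ∈ B
    · exact (hfg q hq).trans (le_add_right (by simp [G, h₁]))
    by_cases h₂ : q.2 ∈ B
    · exact (hfg q hq).trans (le_add_left (by simp [G, h₂, hsymm]))
    · simp [hf₀ q hq h₁ h₂]
  have hint : ∫⁻ q in S ×ˢ S, G q ∂μ.prod μ ≤ M * μ (S ∩ B) := by
    rw [← Measure.prod_restrict, lintegral_prod _ hG.aemeasurable]
    calc ∫⁻ y in S, ∫⁻ z in S, G (y, z) ∂μ ∂μ ≤ ∫⁻ y in S, B.indicator (fun _ => M) y ∂μ := by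
          refine lintegral_mono fun y => ?_
          by_cases hy : y ∈ B
          · simpa [G, hy] using hM y hy
          · simp [G, hy]
      _ = M * μ (S ∩ B) := by
          rw [lintegral_indicator_const hB, Measure.restrict_apply hB, inter_comm]
  have hswap : ∫⁻ q in S ×ˢ S, G q.swap ∂μ.prod μ = ∫⁻ q in S ×ˢ S, G q ∂μ.prod μ := by
    rw [← Measure.prod_restrict]
    exact lintegral_prod_swap G
  calc ∫⁻ q in D, f q ∂μ.prod μ ≤ ∫⁻ q in D, G q + G q.swap ∂μ.prod μ :=
        setLIntegral_mono (hG.add (hG.comp measurable_swap)) hfG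
    _ ≤ ∫⁻ q in S ×ˢ S, G q + G q.swap ∂μ.prod μ := lintegral_mono_set hD
    _ ≤ 2 * (M * μ (S ∩ B)) := by
        rw [lintegral_add_left hG, hswap, ← two_mul]
        gcongr

lemma exists_setLIntegral_le_of_measure_inter_ball_lt {E : Type*} [PseudoMetricSpace E]
    [MeasurableSpace E] [OpensMeasurableSpace E] {μ : Measure E} {f : E → ℝ≥0∞}
    (hf : ∫⁻ x, f x ∂μ ≠ ⊤) (x₀ : E) {ε : ℝ≥0∞} (hε : ε ≠ 0) :
    ∃ δ : ℝ≥0∞, 0 < δ ∧ ∃ l : ℕ, ∀ T : Set E, μ (T ∩ Metric.ball x₀ l) < δ →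
      ∫⁻ x in T, f x ∂μ ≤ ε := by
  have hball : ∀ n : ℕ, MeasurableSet (Metric.ball x₀ (n : ℝ))ᶜ := fun n =>
    Metric.isOpen_ball.measurableSet.compl
  have hanti : Antitone fun n : ℕ => (Metric.ball x₀ (n : ℝ))ᶜ := fun a b hab =>
    compl_subset_compl.2 (Metric.ball_subset_ball (by exact_mod_cast hab))
  have htail : Tendsto (fun n : ℕ => ∫⁻ x in (Metric.ball x₀ (n : ℝ))ᶜ, f x ∂μ) atTop (𝓝 0) := by
    have h := tendsto_measure_iInter_atTop (μ := μ.withDensity f)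
      (fun n => (hball n).nullMeasurableSet) hanti
      ⟨0, by simpa [withDensity_apply] using hf⟩
    rw [← compl_iUnion, Metric.iUnion_ball_nat, compl_univ, measure_empty] at h
    exact h.congr fun n => withDensity_apply _ (hball n)
  obtain ⟨δ, hδ, hδε⟩ := exists_pos_setLIntegral_lt_of_measure_lt hf (ENNReal.half_pos hε).ne'
  obtain ⟨l, hl⟩ := (htail.eventually_lt_const (ENNReal.half_pos hε)).exists
  refine ⟨δ, hδ, l, fun T hT => ?_⟩
  calc ∫⁻ x in T, f x ∂μ
      ≤ ∫⁻ x in (T ∩ Metric.ball x₀ l) ∪ (Metric.ball x₀ l)ᶜ, f x ∂μ :=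
        lintegral_mono_set fun x hx => by
          by_cases h : x ∈ Metric.ball x₀ l
          exacts [Or.inl ⟨hx, h⟩, Or.inr h]
    _ ≤ ε / 2 + ε / 2 :=
        (lintegral_union_le _ _ _).trans (add_le_add (hδε _ hT).le hl.le)
    _ = ε := ENNReal.add_halves ε

end SparseSets

section TruncatedKernel

variable {N : ℕ} {s r : ℝ}

/-- The kernel `|v| ^ (-(N + 2s))` damped by `(|v| / r)²` inside the ball of radius `r`, which
makes it integrable. -/
def truncKernel (N : ℕ) (s r : ℝ) (v : Euc N) : ℝ :=
  min 1 ((‖v‖ / r) ^ 2) / ‖v‖ ^ ((N : ℝ) + 2 * s)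

lemma truncKernel_neg (v : Euc N) : truncKernel N s r (-v) = truncKernel N s r v := by
  simp only [truncKernel, norm_neg]

lemma measurable_truncKernel : Measurable (truncKernel N s r) :=
  (measurable_const.min ((measurable_norm.div_const r).pow_const 2)).div
    (measurable_norm.pow_const _)

lemma pow_pred_div_rpow [NeZero N] {t : ℝ} (ht : 0 < t) :
    t ^ (N - 1) / t ^ ((N : ℝ) + 2 * s) = t ^ (-1 - 2 * s) := by
  rw [← Real.rpow_natCast, ← Real.rpow_sub ht, Nat.cast_pred (NeZero.pos N)]
  congr 1
  ring

lemma pow_pred_mul_truncated_le_near [NeZero N] {t : ℝ} (ht : 0 < t) :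
    t ^ (N - 1) * (min 1 ((t / r) ^ 2) / t ^ ((N : ℝ) + 2 * s)) ≤
      (r ^ 2)⁻¹ * t ^ (1 - 2 * s) := by
  calc _ ≤ t ^ (N - 1) * ((t / r) ^ 2 / t ^ ((N : ℝ) + 2 * s)) := by
        gcongr
        exact min_le_right _ _
    _ = (r ^ 2)⁻¹ * (t ^ 2 * (t ^ (N - 1) / t ^ ((N : ℝ) + 2 * s))) := by
        rw [div_pow]
        ring
    _ = (r ^ 2)⁻¹ * t ^ (1 - 2 * s) := by
        rw [pow_pred_div_rpow ht, ← Real.rpow_natCast t 2, ← Real.rpow_add ht]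
        congr 2
        push_cast
        ring

lemma pow_pred_mul_truncated_le_far [NeZero N] {t : ℝ} (ht : 0 < t) :
    t ^ (N - 1) * (min 1 ((t / r) ^ 2) / t ^ ((N : ℝ) + 2 * s)) ≤ t ^ (-1 - 2 * s) := by
  rw [← pow_pred_div_rpow (N := N) ht, div_eq_mul_one_div (t ^ (N - 1))]
  gcongr
  exact min_le_left _ _

lemma integrable_truncKernel [NeZero N] (hs : s ∈ Ioo (0 : ℝ) 1) (r : ℝ) :
    Integrable (truncKernel N s r) := by
  let profile : ℝ → ℝ := fun t => t ^ (N - 1) * (min 1 ((t / r) ^ 2) / t ^ ((N : ℝ) + 2 * s))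
  have hmeas : Measurable profile :=
    (measurable_id.pow_const _).mul ((measurable_const.min
      ((measurable_id.div_const r).pow_const 2)).div (measurable_id.pow_const _))
  have hnorm : ∀ t : ℝ, 0 < t → ‖profile t‖ = profile t := fun t ht =>
    Real.norm_of_nonneg (by positivity)
  have hnear : IntegrableOn profile (Ioc 0 1) := by
    have hdom : IntegrableOn (fun t : ℝ => (r ^ 2)⁻¹ * t ^ (1 - 2 * s)) (Ioc 0 1) := by
      rw [← intervalIntegrable_iff_integrableOn_Ioc_of_le zero_le_one]
      exact (intervalIntegral.intervalIntegrable_rpow' (by linarith [hs.2])).const_mul _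
    refine hdom.mono' hmeas.aestronglyMeasurable ?_
    filter_upwards [ae_restrict_mem measurableSet_Ioc] with t ht
    exact (hnorm t ht.1).trans_le (pow_pred_mul_truncated_le_near ht.1)
  have hfar : IntegrableOn profile (Ioi 1) := by
    have hdom : IntegrableOn (fun t : ℝ => t ^ (-1 - 2 * s)) (Ioi 1) :=
      integrableOn_Ioi_rpow_of_lt (by linarith [hs.1]) zero_lt_one
    refine hdom.mono' hmeas.aestronglyMeasurable ?_
    filter_upwards [ae_restrict_mem measurableSet_Ioi] with t ht
    have ht₀ : 0 < t := zero_lt_one.trans ht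
    exact (hnorm t ht₀).trans_le (pow_pred_mul_truncated_le_far ht₀)
  refine (integrable_fun_norm_addHaar volume
    (f := fun t => min 1 ((t / r) ^ 2) / t ^ ((N : ℝ) + 2 * s))).2 ?_
  simp only [finrank_euclideanSpace, Fintype.card_fin, smul_eq_mul]
  rw [← Ioc_union_Ioi_eq_Ioi (zero_le_one : (0 : ℝ) ≤ 1)]
  exact hnear.union hfar

lemma truncKernel_smul (hr : 0 < r) (w : Euc N) :
    truncKernel N s r (r • w) = r ^ (-((N : ℝ) + 2 * s)) * truncKernel N s 1 w := by
  have hpow : r ^ ((N : ℝ) + 2 * s) ≠ 0 := (Real.rpow_pos_of_pos hr _).ne'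
  rw [truncKernel, truncKernel, norm_smul, Real.norm_of_nonneg hr.le,
    Real.mul_rpow hr.le (norm_nonneg w), mul_div_cancel_left₀ _ hr.ne', div_one,
    Real.rpow_neg hr.le]
  field_simp

lemma volume_eq_smul_map_affine (y : Euc N) (hr : 0 < r) :
    (volume : Measure (Euc N)) =
      ENNReal.ofReal (r ^ N) • Measure.map (fun w => y + r • w) volume := by
  have hcomp : (fun w : Euc N => y + r • w) = (y + ·) ∘ (r • ·) := rfl
  rw [hcomp, ← Measure.map_map (measurable_const_add y) (measurable_const_smul r),
    Measure.map_addHaar_smul volume hr.ne', Measure.map_smul, map_add_left_eq_self, smul_smul,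
    finrank_euclideanSpace, Fintype.card_fin, abs_of_pos (by positivity),
    ← ENNReal.ofReal_mul (by positivity), mul_inv_cancel₀ (by positivity), ENNReal.ofReal_one,
    one_smul]

lemma setLIntegral_truncKernel_eq {S : Set (Euc N)} (hS : MeasurableSet S) (y : Euc N)
    (hr : 0 < r) :
    ∫⁻ z in S, ENNReal.ofReal (truncKernel N s r (y - z)) = ENNReal.ofReal (r ^ (-(2 * s))) *
      ∫⁻ w in (fun w => y + r • w) ⁻¹' S, ENNReal.ofReal (truncKernel N s 1 w) := by
  have hmeas : Measurable fun z : Euc N => ENNReal.ofReal (truncKernel N s r (y - z)) :=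
    (measurable_truncKernel.comp (measurable_const_sub y)).ennreal_ofReal
  have hφ : Measurable fun w : Euc N => y + r • w := (measurable_const_smul r).const_add y
  have hrN : r ^ N * r ^ (-((N : ℝ) + 2 * s)) = r ^ (-(2 * s)) := by
    rw [← Real.rpow_natCast, ← Real.rpow_add hr]
    congr 1
    ring
  have hscale : ∀ w : Euc N, ENNReal.ofReal (truncKernel N s r (y - (y + r • w))) =
      ENNReal.ofReal (r ^ (-((N : ℝ) + 2 * s))) * ENNReal.ofReal (truncKernel N s 1 w) := by
    intro w
    rw [sub_add_cancel_left, truncKernel_neg, truncKernel_smul hr,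
      ENNReal.ofReal_mul (by positivity)]
  conv_lhs => rw [volume_eq_smul_map_affine y hr, Measure.restrict_smul, lintegral_smul_measure,
    setLIntegral_map hS hmeas hφ]
  simp_rw [hscale]
  rw [lintegral_const_mul' _ _ ENNReal.ofReal_ne_top, smul_eq_mul, ← mul_assoc,
    ← ENNReal.ofReal_mul (by positivity), hrN]

lemma exists_setLIntegral_truncKernel_le [NeZero N] (hs : s ∈ Ioo (0 : ℝ) 1) {ε : ℝ≥0∞}
    (hε : ε ≠ 0) :
    ∃ δ : ℝ, 0 < δ ∧ ∃ l : ℕ, ∀ (S : Set (Euc N)) (y : Euc N) (r : ℝ), MeasurableSet S → 0 < r →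
      volume (S ∩ Metric.ball y (l * r)) < ENNReal.ofReal (δ * r ^ N) →
      ∫⁻ z in S, ENNReal.ofReal (truncKernel N s r (y - z)) ≤
        ENNReal.ofReal (r ^ (-(2 * s))) * ε := by
  obtain ⟨δ, hδ, l, hl⟩ := exists_setLIntegral_le_of_measure_inter_ball_lt
    (integrable_truncKernel (N := N) hs 1).lintegral_lt_top.ne 0 hε
  obtain ⟨δ', -, hδ', hδδ'⟩ := ENNReal.lt_iff_exists_real_btwn.1 hδ
  refine ⟨δ', ENNReal.ofReal_pos.1 hδ', l, fun S y r hS hr hsparse => ?_⟩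
  rw [setLIntegral_truncKernel_eq hS y hr]
  gcongr
  refine hl _ (lt_of_lt_of_le ?_ hδδ'.le)
  have hball : (fun w => y + r • w) ⁻¹' Metric.ball y (l * r) = Metric.ball 0 (l : ℝ) := by
    ext w
    simp only [mem_preimage, Metric.mem_ball, dist_self_add_left, norm_smul, dist_zero_right,
      Real.norm_of_nonneg hr.le]
    rw [mul_comm, mul_lt_mul_iff_left₀ hr]
  rw [volume_eq_smul_map_affine y hr, Measure.smul_apply,
    Measure.map_apply ((measurable_const_smul r).const_add y)
      (hS.inter Metric.isOpen_ball.measurableSet), preimage_inter, hball, smul_eq_mul, mul_comm δ',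
    ENNReal.ofReal_mul (by positivity)] at hsparse
  exact lt_of_mul_lt_mul_left' hsparse

lemma setLIntegral_sq_div_kern_le {S B : Set (Euc N)} (hB : MeasurableSet B)
    {D : Set (Euc N × Euc N)} (hD : D ⊆ S ×ˢ S) {u : Euc N → ℝ}
    (hu : ∀ q ∈ D, (u q.1 - u q.2) ^ 2 ≤ min 1 ((‖q.1 - q.2‖ / r) ^ 2))
    (hu₀ : ∀ y ∉ B, u y = 0) {M : ℝ≥0∞}
    (hM : ∀ y ∈ B, ∫⁻ z in S, ENNReal.ofReal (truncKernel N s r (y - z)) ≤ M) :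
    ∫⁻ q in D, ENNReal.ofReal ((u q.1 - u q.2) ^ 2 / kern N s q.1 q.2) ≤
      2 * (M * volume (S ∩ B)) := by
  rw [Measure.volume_eq_prod]
  refine setLIntegral_le_of_kernel_bound
    (g := fun q => ENNReal.ofReal (truncKernel N s r (q.1 - q.2)))
    (measurable_truncKernel.comp (measurable_fst.sub measurable_snd)).ennreal_ofReal
    (fun q => ?_) hB hD (fun q hq => ENNReal.ofReal_le_ofReal ?_) (fun q _ h₁ h₂ => ?_) hM
  · rw [← neg_sub, truncKernel_neg]
    rfl
  · exact div_le_div_of_nonneg_right (hu q hq) (kern_nonneg _ _)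
  · simp [hu₀ _ h₁, hu₀ _ h₂]

end TruncatedKernel

section BallMass

variable {N : ℕ} {Ω : Set (Euc N)} {x y : Euc N} {r ρ : ℝ}

/-- The volume of the part of `Ω` inside the ball of radius `r` about `x`. -/
def ballMass (Ω : Set (Euc N)) (x : Euc N) (r : ℝ) : ℝ :=
  volume.real (Ω ∩ Metric.ball x r)

lemma volume_inter_ball_ne_top : volume (Ω ∩ Metric.ball x r) ≠ ⊤ :=
  measure_ne_top_of_subset inter_subset_right Metric.isBounded_ball.measure_lt_top.ne

lemma ofReal_ballMass : ENNReal.ofReal (ballMass Ω x r) = volume (Ω ∩ Metric.ball x r) :=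
  ofReal_measureReal volume_inter_ball_ne_top

lemma ballMass_le_ballMass (h : r + dist x y ≤ ρ) : ballMass Ω x r ≤ ballMass Ω y ρ :=
  measureReal_mono (inter_subset_inter_right _ (Metric.ball_subset_ball' h))
    volume_inter_ball_ne_top

lemma ballMass_pos (hΩ : IsOpen Ω) (hx : x ∈ closure Ω) (hr : 0 < r) : 0 < ballMass Ω x r := by
  obtain ⟨y, hyΩ, hy⟩ := Metric.mem_closure_iff.1 hx r hr
  have hne : (Ω ∩ Metric.ball x r).Nonempty := ⟨y, hyΩ, by rwa [Metric.mem_ball, dist_comm]⟩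
  exact ENNReal.toReal_pos ((hΩ.inter Metric.isOpen_ball).measure_pos volume hne).ne'
    volume_inter_ball_ne_top

/-- The volume of the unit ball of `ℝ^N`. -/
def unitBallVolume (N : ℕ) : ℝ := volume.real (Metric.ball (0 : Euc N) 1)

lemma unitBallVolume_pos : 0 < unitBallVolume N :=
  ENNReal.toReal_pos (Metric.measure_ball_pos _ _ one_pos).ne' measure_ball_lt_top.ne

lemma volume_real_ball (hr : 0 < r) :
    volume.real (Metric.ball x r) = r ^ N * unitBallVolume N := by
  rw [unitBallVolume, measureReal_def, Measure.addHaar_ball_of_pos volume x hr, ENNReal.toReal_mul,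
    ENNReal.toReal_ofReal (by positivity), finrank_euclideanSpace, Fintype.card_fin,
    measureReal_def]

lemma ballMass_eq_of_ball_subset (hr : 0 < r) (h : Metric.ball x r ⊆ Ω) :
    ballMass Ω x r = r ^ N * unitBallVolume N := by
  rw [ballMass, inter_eq_right.2 h, volume_real_ball hr]

lemma ae_tendsto_ballMass_div_pow (hΩ : MeasurableSet Ω) :
    ∀ᵐ x, x ∉ Ω → Tendsto (fun r => ballMass Ω x r / r ^ N) (𝓝[>] 0) (𝓝 0) := by
  filter_upwards [Besicovitch.ae_tendsto_measure_inter_div_of_measurableSet volume hΩ] with x hx hxΩ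
  rw [indicator_of_notMem hxΩ] at hx
  have hlim := ((ENNReal.tendsto_toReal ENNReal.zero_ne_top).comp hx).mul_const (unitBallVolume N)
  rw [ENNReal.toReal_zero, zero_mul] at hlim
  refine squeeze_zero' ?_ ?_ hlim
  · filter_upwards [self_mem_nhdsWithin] with r (hr : 0 < r)
    exact div_nonneg measureReal_nonneg (by positivity)
  · filter_upwards [self_mem_nhdsWithin] with r (hr : 0 < r)
    have hball : (volume (Metric.closedBall x r)).toReal = r ^ N * unitBallVolume N := by
      rw [Measure.addHaar_closedBall volume x hr.le, ← Measure.addHaar_ball_of_pos volume x hr]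
      exact volume_real_ball hr
    have hmono : ballMass Ω x r ≤ (volume (Ω ∩ Metric.closedBall x r)).toReal :=
      ENNReal.toReal_mono
        (measure_ne_top_of_subset inter_subset_right Metric.isBounded_closedBall.measure_lt_top.ne)
        (measure_mono (inter_subset_inter_right _ Metric.ball_subset_closedBall))
    have := unitBallVolume_pos (N := N)
    rw [Function.comp_apply, ENNReal.toReal_div, hball, div_mul_eq_mul_div,
      mul_div_mul_right _ _ this.ne']
    gcongr

end BallMass

section Cutoff

variable {N : ℕ} {s r : ℝ} {Ω : Set (Euc N)} {x y z : Euc N}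

/-- The radial cutoff about `x` that decreases from `1` to `0`, with slope `1 / r`, between the
radii `r` and `2 * r`. -/
def cutoff (x : Euc N) (r : ℝ) (y : Euc N) : ℝ := max 0 (min 1 (2 - dist y x / r))

lemma measurable_cutoff : Measurable (cutoff x r) := by
  have : Continuous (cutoff x r) := by
    unfold cutoff
    fun_prop
  exact this.measurable

lemma cutoff_nonneg : 0 ≤ cutoff x r y := le_max_left _ _

lemma cutoff_le_one : cutoff x r y ≤ 1 := max_le zero_le_one (min_le_left _ _)

lemma cutoff_eq_one (hr : 0 < r) (hy : y ∈ Metric.ball x r) : cutoff x r y = 1 := by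
  have : dist y x / r ≤ 1 := (div_le_one hr).2 hy.le
  rw [cutoff, min_eq_left (by linarith), max_eq_right zero_le_one]

lemma cutoff_eq_zero (hr : 0 < r) (hy : y ∉ Metric.ball x (2 * r)) : cutoff x r y = 0 := by
  have : 2 ≤ dist y x / r := (le_div_iff₀ hr).2 (not_lt.1 hy)
  exact max_eq_left ((min_le_right _ _).trans (by linarith))

lemma sq_cutoff_sub_cutoff_le :
    (cutoff x r y - cutoff x r z) ^ 2 ≤ min 1 ((‖y - z‖ / r) ^ 2) := by
  have h₀ : ∀ w, 0 ≤ cutoff x r w := fun _ => cutoff_nonneg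
  have h₁ : ∀ w, cutoff x r w ≤ 1 := fun _ => cutoff_le_one
  refine le_min ?_ (sq_le_sq.2 ?_)
  · exact (sq_le_one_iff_abs_le_one _).2
      (abs_le.2 ⟨by linarith [h₀ y, h₁ z], by linarith [h₁ y, h₀ z]⟩)
  calc |cutoff x r y - cutoff x r z|
      ≤ max |0 - 0| |min 1 (2 - dist y x / r) - min 1 (2 - dist z x / r)| :=
        abs_max_sub_max_le_max _ _ _ _
    _ ≤ |(2 - dist y x / r) - (2 - dist z x / r)| := by
        refine max_le (by simp) ((abs_min_sub_min_le_max _ _ _ _).trans ?_)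
        simp
    _ = |dist y x - dist z x| / |r| := by
        rw [← abs_div, ← abs_neg]
        congr 1
        ring
    _ ≤ |‖y - z‖ / r| := by
        rw [abs_div, abs_norm, ← dist_eq_norm]
        gcongr
        exact abs_dist_sub_le _ _ _

lemma l2sq_cutoff_le (hr : 0 < r) :
    l2sq N Ω (cutoff x r) ≤ volume (Ω ∩ Metric.ball x (2 * r)) := by
  have hball : MeasurableSet (Metric.ball x (2 * r)) := Metric.isOpen_ball.measurableSet
  calc l2sq N Ω (cutoff x r) ≤ ∫⁻ y in Ω, (Metric.ball x (2 * r)).indicator 1 y := by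
        refine lintegral_mono fun y => ?_
        by_cases hy : y ∈ Metric.ball x (2 * r)
        · rw [indicator_of_mem hy]
          exact ENNReal.ofReal_le_one.2 (pow_le_one₀ cutoff_nonneg cutoff_le_one)
        · simp [cutoff_eq_zero hr hy]
    _ = volume (Ω ∩ Metric.ball x (2 * r)) := by
        rw [lintegral_indicator_one hball, Measure.restrict_apply hball, inter_comm]

lemma exists_rpow_neg_ge {p : ℝ} (hp : 0 < p) (C : ℝ) :
    ∃ R : ℝ, 0 < R ∧ ∀ r : ℝ, 0 < r → r ≤ R → C ≤ r ^ (-p) := by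
  obtain ⟨R, hR, hsub⟩ := mem_nhdsGT_iff_exists_Ioc_subset.1
    ((tendsto_rpow_neg_nhdsGT_zero (by linarith : -p < 0)).eventually_ge_atTop C)
  exact ⟨R, hR, fun r h₀ h₁ => hsub ⟨h₀, h₁⟩⟩

lemma exists_semiSqOn_cutoff_le [NeZero N] (hs : s ∈ Ioo (0 : ℝ) 1) (hΩ : MeasurableSet Ω) {ε : ℝ}
    (hε : 0 < ε) :
    ∃ δ : ℝ, 0 < δ ∧ ∃ l : ℕ, ∀ (x : Euc N) (r : ℝ), 0 < r →
      ballMass Ω x (2 ^ l * r) < δ * r ^ N →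
      semiSqOn N s Ω (cutoff x r) ≤ ENNReal.ofReal (ε * r ^ (-(2 * s)) * ballMass Ω x (2 * r)) := by
  obtain ⟨δ, hδ, l, hl⟩ := exists_setLIntegral_truncKernel_le (N := N) hs
    (ENNReal.ofReal_pos.2 (half_pos hε)).ne'
  refine ⟨δ, hδ, l + 1, fun x r hr hsparse => ?_⟩
  have hpot : ∀ y ∈ Metric.ball x (2 * r), ∫⁻ z in Ω, ENNReal.ofReal (truncKernel N s r (y - z)) ≤
      ENNReal.ofReal (r ^ (-(2 * s)) * (ε / 2)) := by
    intro y hy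
    rw [ENNReal.ofReal_mul (by positivity)]
    refine hl Ω y r hΩ hr ?_
    have hscale : (l : ℝ) * r + 2 * r ≤ 2 ^ (l + 1) * r := by
      have : ((l + 1 : ℕ) : ℝ) + 1 ≤ 2 ^ (l + 1) := by exact_mod_cast (l + 1).lt_two_pow_self
      push_cast at this
      nlinarith
    rw [← ofReal_ballMass, ENNReal.ofReal_lt_ofReal_iff (by positivity)]
    exact (ballMass_le_ballMass (by linarith [Metric.mem_ball.1 hy])).trans_lt hsparse
  refine (setLIntegral_sq_div_kern_le Metric.isOpen_ball.measurableSet subset_rfl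
    (fun q _ => sq_cutoff_sub_cutoff_le) (fun y => cutoff_eq_zero hr) hpot).trans_eq ?_
  rw [← ofReal_ballMass, ← ENNReal.ofReal_mul (by positivity), ← ENNReal.ofReal_ofNat 2,
    ← ENNReal.ofReal_mul (by positivity)]
  congr 1
  ring

lemma exists_cutoff_norm_le [NeZero N] (hs : s ∈ Ioo (0 : ℝ) 1) (hΩ : MeasurableSet Ω) {ε : ℝ}
    (hε : 0 < ε) :
    ∃ δ : ℝ, 0 < δ ∧ ∃ l : ℕ, ∃ R : ℝ, 0 < R ∧ ∀ (x : Euc N) (r : ℝ), 0 < r → r ≤ R →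
      ballMass Ω x (2 ^ l * r) < δ * r ^ N →
      l2sq N Ω (cutoff x r) + semiSqOn N s Ω (cutoff x r) ≤
        ENNReal.ofReal (ε * r ^ (-(2 * s)) * ballMass Ω x (2 * r)) := by
  obtain ⟨δ, hδ, l, hsemi⟩ := exists_semiSqOn_cutoff_le hs hΩ (half_pos hε)
  obtain ⟨R, hR, hRs⟩ := exists_rpow_neg_ge (by linarith [hs.1] : 0 < 2 * s) (2 / ε)
  refine ⟨δ, hδ, l, R, hR, fun x r hr hrR hsparse => ?_⟩
  have hmass : 0 ≤ ballMass Ω x (2 * r) := measureReal_nonneg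
  have hl2 : l2sq N Ω (cutoff x r) ≤
      ENNReal.ofReal (ε / 2 * r ^ (-(2 * s)) * ballMass Ω x (2 * r)) := by
    refine (l2sq_cutoff_le hr).trans ?_
    rw [← ofReal_ballMass]
    refine ENNReal.ofReal_le_ofReal (le_mul_of_one_le_left hmass ?_)
    calc 1 = ε / 2 * (2 / ε) := by field_simp
      _ ≤ ε / 2 * r ^ (-(2 * s)) := by gcongr; exact hRs r hr hrR
  refine (add_le_add hl2 (hsemi x r hr hsparse)).trans_eq ?_
  rw [← ENNReal.ofReal_add (by positivity) (by positivity)]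
  congr 1
  ring

end Cutoff

section EnergyLowerBound

variable {N : ℕ} {s r : ℝ} {Ω : Set (Euc N)} {x : Euc N}

lemma sq_sub_le_mul_div_kern (u : Euc N → ℝ) {y z : Euc N} (hs : 0 ≤ s)
    (hy : y ∈ Metric.ball x r) (hz : z ∈ Metric.ball x r) :
    (u y - u z) ^ 2 ≤ (2 * r) ^ ((N : ℝ) + 2 * s) * ((u y - u z) ^ 2 / kern N s y z) := by
  rcases eq_or_ne y z with rfl | hne
  · simp
  have hdist : ‖y - z‖ ≤ 2 * r := by
    rw [← dist_eq_norm]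
    linarith [dist_triangle_right y z x, Metric.mem_ball.1 hy, Metric.mem_ball.1 hz]
  have hkern : kern N s y z ≤ (2 * r) ^ ((N : ℝ) + 2 * s) :=
    Real.rpow_le_rpow (norm_nonneg _) hdist (by positivity)
  calc (u y - u z) ^ 2 = kern N s y z * ((u y - u z) ^ 2 / kern N s y z) :=
        (mul_div_cancel₀ _ (kern_pos hne).ne').symm
    _ ≤ _ := by
        gcongr
        exact div_nonneg (sq_nonneg _) (kern_nonneg _ _)

/-- No number is close to both `0` and `1`. -/
lemma mul_half_le_setLIntegral_sq_sub {E : Type*} [MeasurableSpace E] {μ : Measure E} {u : E → ℝ}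
    {A D : Set E} (hD : MeasurableSet D) (hAD : Disjoint A D) (huA : u =ᵐ[μ.restrict A] 1)
    (huD : u =ᵐ[μ.restrict D] 0) {m : ℝ≥0∞} (hmA : m ≤ μ A) (hmD : m ≤ μ D) (t : ℝ) :
    m * ENNReal.ofReal (1 / 2) ≤ ∫⁻ y in A ∪ D, ENNReal.ofReal ((u y - t) ^ 2) ∂μ := by
  have hA : ∫⁻ y in A, ENNReal.ofReal ((u y - t) ^ 2) ∂μ = ENNReal.ofReal ((1 - t) ^ 2) * μ A := by
    rw [← setLIntegral_const]
    exact lintegral_congr_ae (huA.mono fun y hy => by simp [hy])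
  have hD' : ∫⁻ y in D, ENNReal.ofReal ((u y - t) ^ 2) ∂μ = ENNReal.ofReal ((0 - t) ^ 2) * μ D := by
    rw [← setLIntegral_const]
    exact lintegral_congr_ae (huD.mono fun y hy => by simp [hy])
  rw [lintegral_union hD hAD, hA, hD']
  calc m * ENNReal.ofReal (1 / 2) ≤ m * ENNReal.ofReal ((1 - t) ^ 2 + (0 - t) ^ 2) := by
        gcongr
        linarith [sq_nonneg (t - 1 / 2)]
    _ = ENNReal.ofReal ((1 - t) ^ 2) * m + ENNReal.ofReal ((0 - t) ^ 2) * m := by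
        rw [ENNReal.ofReal_add (sq_nonneg _) (sq_nonneg _), ← add_mul, mul_comm]
    _ ≤ _ := by gcongr

lemma mul_volume_ball_le_semiSq (hs : 0 ≤ s) (hr : 0 < r) {u : Euc N → ℝ} (hu : Measurable u)
    {A D : Set (Euc N)} (hA : MeasurableSet A) (hD : MeasurableSet D) (hAD : Disjoint A D)
    (hAΩ : A ⊆ Ω ∩ Metric.ball x r) (hDΩ : D ⊆ Ω ∩ Metric.ball x r)
    (huA : u =ᵐ[volume.restrict A] 1) (huD : u =ᵐ[volume.restrict D] 0) {m : ℝ≥0∞}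
    (hmA : m ≤ volume A) (hmD : m ≤ volume D) :
    m * volume (Metric.ball x r) ≤
      ENNReal.ofReal (2 * (2 * r) ^ ((N : ℝ) + 2 * s)) * semiSq N s Ω u := by
  let f : Euc N × Euc N → ℝ≥0∞ := fun q => ENNReal.ofReal ((u q.1 - u q.2) ^ 2)
  have hf : Measurable f :=
    (((hu.comp measurable_fst).sub (hu.comp measurable_snd)).pow_const 2).ennreal_ofReal
  have hsub : (A ∪ D) ×ˢ Metric.ball x r ⊆ reg N Ω := fun q hq =>
    Or.inl (subset_closure (union_subset hAΩ hDΩ hq.1).1)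
  have hball : ∀ q ∈ (A ∪ D) ×ˢ Metric.ball x r, f q ≤ ENNReal.ofReal
      ((2 * r) ^ ((N : ℝ) + 2 * s)) * ENNReal.ofReal ((u q.1 - u q.2) ^ 2 / kern N s q.1 q.2) := by
    intro q hq
    rw [← ENNReal.ofReal_mul (by positivity)]
    exact ENNReal.ofReal_le_ofReal
      (sq_sub_le_mul_div_kern u hs (union_subset hAΩ hDΩ hq.1).2 hq.2)
  calc m * volume (Metric.ball x r)
      = ENNReal.ofReal 2 * ∫⁻ _ in Metric.ball x r, m * ENNReal.ofReal (1 / 2) := by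
        rw [setLIntegral_const, ← mul_assoc, mul_left_comm, ← ENNReal.ofReal_mul zero_le_two]
        norm_num
    _ ≤ ENNReal.ofReal 2 * ∫⁻ q in (A ∪ D) ×ˢ Metric.ball x r, f q := by
        rw [Measure.volume_eq_prod, ← Measure.prod_restrict, lintegral_prod_symm _ hf.aemeasurable]
        gcongr with z
        exact mul_half_le_setLIntegral_sq_sub hD hAD huA huD hmA hmD (u z)
    _ ≤ ENNReal.ofReal 2 * (ENNReal.ofReal ((2 * r) ^ ((N : ℝ) + 2 * s)) * semiSq N s Ω u) := by
        rw [semiSq, ← lintegral_const_mul' (ENNReal.ofReal (_ ^ _)) _ ENNReal.ofReal_ne_top]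
        exact mul_le_mul_right ((setLIntegral_mono' ((hA.union hD).prod
          Metric.isOpen_ball.measurableSet) hball).trans (lintegral_mono_set hsub)) _
    _ = _ := by rw [← mul_assoc, ← ENNReal.ofReal_mul zero_le_two]

lemma ballMass_mul_volume_ball_le_semiSq (hs : 0 ≤ s) (hΩ : MeasurableSet Ω) (hr : 0 < r)
    {U : Euc N → ℝ} (hU : Measurable U) (hUcut : U =ᵐ[volume.restrict Ω] cutoff x r)
    (hdouble : ballMass Ω x (2 * r) ≤ 2 ^ N * ballMass Ω x r)
    (hgrow : 3 / 2 * ballMass Ω x (2 * r) ≤ ballMass Ω x (4 * r)) :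
    ENNReal.ofReal ((2 ^ (N + 1))⁻¹ * ballMass Ω x (2 * r)) * volume (Metric.ball x (4 * r)) ≤
      ENNReal.ofReal (2 * (2 * (4 * r)) ^ ((N : ℝ) + 2 * s)) * semiSq N s Ω U := by
  have hmono : ∀ {ρ ρ'}, ρ ≤ ρ' → Ω ∩ Metric.ball x ρ ⊆ Ω ∩ Metric.ball x ρ' := fun h =>
    inter_subset_inter_right _ (Metric.ball_subset_ball h)
  have hmeas : ∀ ρ, MeasurableSet (Ω ∩ Metric.ball x ρ) := fun ρ =>
    hΩ.inter Metric.isOpen_ball.measurableSet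
  let A := Ω ∩ Metric.ball x r
  let D := (Ω ∩ Metric.ball x (4 * r)) \ (Ω ∩ Metric.ball x (2 * r))
  have hD : MeasurableSet D := (hmeas _).diff (hmeas _)
  have hUA : U =ᵐ[volume.restrict A] 1 := by
    filter_upwards [ae_restrict_of_ae_restrict_of_subset inter_subset_left hUcut,
      ae_restrict_mem (hmeas r)] with y hy hyA
    rw [hy, cutoff_eq_one hr hyA.2, Pi.one_apply]
  have hUD : U =ᵐ[volume.restrict D] 0 := by
    filter_upwards [ae_restrict_of_ae_restrict_of_subset (fun _ h => h.1.1) hUcut,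
      ae_restrict_mem hD] with y hy hyD
    rw [hy, cutoff_eq_zero hr fun h => hyD.2 ⟨hyD.1.1, h⟩, Pi.zero_apply]
  have hb₀ : 0 ≤ ballMass Ω x r := measureReal_nonneg
  have hb : 0 ≤ ballMass Ω x (2 * r) := measureReal_nonneg
  refine mul_volume_ball_le_semiSq hs (by positivity) hU (hmeas r) hD
    (disjoint_sdiff_right.mono_left (hmono (by linarith))) (hmono (by linarith)) sdiff_subset
    hUA hUD ?_ ?_
  · rw [← ofReal_ballMass]
    refine ENNReal.ofReal_le_ofReal ((inv_mul_le_iff₀ (by positivity)).2 (hdouble.trans ?_))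
    gcongr <;> simp
  · rw [measure_sdiff (hmono (by linarith)) (hmeas _).nullMeasurableSet volume_inter_ball_ne_top,
      ← ofReal_ballMass, ← ofReal_ballMass, ← ENNReal.ofReal_sub _ hb]
    refine ENNReal.ofReal_le_ofReal ?_
    have hhalf : (2 ^ (N + 1) : ℝ)⁻¹ ≤ 2⁻¹ :=
      inv_anti₀ two_pos (le_self_pow₀ one_le_two N.succ_ne_zero)
    linarith [mul_le_mul_of_nonneg_right hhalf hb]

lemma exists_le_semiSq_of_ae_eq_cutoff (N : ℕ) (hs : 0 ≤ s) :
    ∃ c : ℝ, 0 < c ∧ ∀ {Ω : Set (Euc N)} {x : Euc N} {r : ℝ} {U : Euc N → ℝ},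
      MeasurableSet Ω → 0 < r → Measurable U → U =ᵐ[volume.restrict Ω] cutoff x r →
      ballMass Ω x (2 * r) ≤ 2 ^ N * ballMass Ω x r →
      3 / 2 * ballMass Ω x (2 * r) ≤ ballMass Ω x (4 * r) →
      ENNReal.ofReal (c * r ^ (-(2 * s)) * ballMass Ω x (2 * r)) ≤ semiSq N s Ω U := by
  have hω := unitBallVolume_pos (N := N)
  refine ⟨(2 ^ (N + 1))⁻¹ * (4 ^ N * unitBallVolume N) / (2 * (2 * 4) ^ ((N : ℝ) + 2 * s)),
    by positivity, fun {Ω x r U} hΩ hr hU hUcut hdouble hgrow => ?_⟩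
  have hpow : (2 * (4 * r)) ^ ((N : ℝ) + 2 * s) * r ^ (-(2 * s)) =
      (2 * 4) ^ ((N : ℝ) + 2 * s) * r ^ N := by
    rw [← mul_assoc, Real.mul_rpow (by norm_num) hr.le, mul_assoc, ← Real.rpow_add hr,
      add_neg_cancel_right, Real.rpow_natCast]
  have hfactor : 0 < 2 * (2 * (4 * r)) ^ ((N : ℝ) + 2 * s) := by positivity
  refine (ENNReal.mul_le_mul_iff_right (ENNReal.ofReal_pos.2 hfactor).ne'
    ENNReal.ofReal_ne_top).1 (le_of_eq_of_le ?_
      (ballMass_mul_volume_ball_le_semiSq hs hΩ hr hU hUcut hdouble hgrow))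
  have hmass : 0 ≤ (2 ^ (N + 1))⁻¹ * ballMass Ω x (2 * r) :=
    mul_nonneg (by positivity) measureReal_nonneg
  rw [← ofReal_measureReal (Metric.isBounded_ball.measure_lt_top.ne),
    volume_real_ball (by positivity), ← ENNReal.ofReal_mul hfactor.le, ← ENNReal.ofReal_mul hmass]
  congr 1
  generalize (2 * (4 * r)) ^ ((N : ℝ) + 2 * s) = p at hpow
  field_simp
  rw [mul_pow]
  linear_combination (4 ^ N * ballMass Ω x (2 * r)) * hpow

end EnergyLowerBound

section SlowGrowth

variable {N : ℕ} {s : ℝ} {Ω : Set (Euc N)}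

/-- Below the scale `R`, wherever `Ω` has density below `δ` at the `2 ^ l` times larger scale, its
mass cannot first double at most as fast as in full space and then grow by a factor `3 / 2`. -/
def SlowGrowth (Ω : Set (Euc N)) (δ : ℝ) (l : ℕ) (R : ℝ) : Prop :=
  ∀ (x : Euc N) (r : ℝ), 0 < r → r ≤ R → ballMass Ω x (2 ^ l * r) < δ * r ^ N →
    0 < ballMass Ω x (2 * r) → ballMass Ω x (2 * r) ≤ 2 ^ N * ballMass Ω x r →
    ballMass Ω x (4 * r) < 3 / 2 * ballMass Ω x (2 * r)

/-- Where `Ω` is sparse, the cutoff has a small norm in `H^s(Ω)`; if `Ω` had comparable mass where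
the cutoff is `1` and where it is `0`, every extension of it would have a large seminorm. -/
lemma HasExtensionProperty.exists_slowGrowth [NeZero N] (hext : HasExtensionProperty N s Ω)
    (hs : s ∈ Ioo (0 : ℝ) 1) (hΩ : MeasurableSet Ω) (hΩ₀ : volume Ω ≠ 0) :
    ∃ δ : ℝ, 0 < δ ∧ ∃ l : ℕ, ∃ R : ℝ, 0 < R ∧ SlowGrowth Ω δ l R := by
  obtain ⟨C, hC⟩ := hext.exists_bound hΩ₀
  obtain ⟨c, hc, hlower⟩ := exists_le_semiSq_of_ae_eq_cutoff N hs.1.le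
  let ε : ℝ := c / (C + 1)
  have hε : 0 < ε := by positivity
  have hCε : C * ε < c := by
    calc C * ε = c * (C / (C + 1)) := by
          simp only [ε]
          ring
      _ < c := mul_lt_of_lt_one_right hc ((div_lt_one (by positivity)).2 (lt_add_one _))
  obtain ⟨δ, hδ, l, R, hR, hcut⟩ := exists_cutoff_norm_le hs hΩ hε
  refine ⟨δ, hδ, l, R, hR, fun x r hr hrR hsparse hpos hdouble => ?_⟩
  by_contra! hgrow
  have hnorm := hcut x r hr hrR hsparse
  have hfin := hnorm.trans_lt ENNReal.ofReal_lt_top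
  obtain ⟨U, hU, hUcut, hUC⟩ := hC (cutoff x r) ⟨measurable_cutoff,
    le_self_add.trans_lt hfin, le_add_self.trans_lt hfin⟩
  have hupper : semiSq N s Ω U < ENNReal.ofReal (c * r ^ (-(2 * s)) * ballMass Ω x (2 * r)) := by
    calc semiSq N s Ω U ≤ C * ENNReal.ofReal (ε * r ^ (-(2 * s)) * ballMass Ω x (2 * r)) :=
          hUC.trans (mul_le_mul_right hnorm _)
      _ = ENNReal.ofReal (C * ε * r ^ (-(2 * s)) * ballMass Ω x (2 * r)) := by
          rw [← ENNReal.ofReal_coe_nnreal, ← ENNReal.ofReal_mul C.coe_nonneg]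
          simp only [mul_assoc]
      _ < _ := (ENNReal.ofReal_lt_ofReal_iff (by positivity)).2 (by gcongr)
  exact hupper.not_ge (hlower hΩ hr hU hUcut hdouble hgrow)

end SlowGrowth

section FirstPassage

variable {a : ℕ → ℝ} {q e : ℝ} {l p K : ℕ}

lemma mul_pow_le_of_slow_growth (ha : ∀ n, 0 < a n) (hq : 2 ≤ q)
    (hslow : ∀ k, a k * q ^ k < e → a (k + l + 1) ≤ q * a (k + l + 2) →
      a (k + l) < 3 / 2 * a (k + l + 1))
    (hlt : ∀ k ≤ p, a k * q ^ k < e) (hp : e ≤ a (p + 1) * q ^ (p + 1)) (hlp : l ≤ p) :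
    a l * q ^ l ≤ (3 / 4) ^ (p - l) * e := by
  have hq₀ : 0 < q := by linarith
  suffices a l ≤ q * a (l + 1) ∧ a l * q ^ l ≤ (3 / 4) ^ (p - l) * e from this.2
  refine Nat.decreasingInduction' (P := fun n => a n ≤ q * a (n + 1) ∧
    a n * q ^ n ≤ (3 / 4) ^ (p - n) * e) (fun n hnp hln ⟨hdouble, hdecay⟩ => ?_) hlp ⟨?_, ?_⟩
  · obtain ⟨k, rfl⟩ := Nat.exists_eq_add_of_le' hln
    have hgrow := hslow k (hlt k (by omega)) hdouble
    refine ⟨by nlinarith [ha (k + l + 1)], ?_⟩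
    calc a (k + l) * q ^ (k + l) ≤ 3 / 2 * a (k + l + 1) * q ^ (k + l) := by gcongr
      _ ≤ 3 / 4 * (a (k + l + 1) * q ^ (k + l + 1)) := by
          rw [pow_succ]
          have := mul_pos (ha (k + l + 1)) (pow_pos hq₀ (k + l))
          nlinarith
      _ ≤ 3 / 4 * ((3 / 4) ^ (p - (k + l + 1)) * e) := by gcongr
      _ = (3 / 4) ^ (p - (k + l)) * e := by
          rw [← mul_assoc, ← pow_succ']
          congr 2
          omega
  · refine le_of_mul_le_mul_right ?_ (pow_pos hq₀ p)
    calc a p * q ^ p ≤ a (p + 1) * q ^ (p + 1) := (hlt p le_rfl).le.trans hp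
      _ = q * a (p + 1) * q ^ p := by ring
  · simpa using (hlt p le_rfl).le

/-- Up to the first `p` with `e ≤ a (p + 1) * q ^ (p + 1)` the sequence doubles at rate at most `q`,
and slow growth propagates this downwards. -/
lemma mul_pow_le_of_slow_growth_of_exists (ha : ∀ n, 0 < a n) (hq : 2 ≤ q)
    (hslow : ∀ k, a k * q ^ k < e → a (k + l + 1) ≤ q * a (k + l + 2) →
      a (k + l) < 3 / 2 * a (k + l + 1))
    (hlt : ∀ k ≤ K, a k * q ^ k < e) (hex : ∃ n, e ≤ a n * q ^ n) (hlK : l ≤ K) :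
    a l * q ^ l ≤ (3 / 4) ^ (K - l) * e := by
  classical
  have hKn : K < Nat.find hex := (Nat.lt_find_iff hex K).2 fun k hk => not_le.2 (hlt k hk)
  obtain ⟨p, hp⟩ := Nat.exists_eq_succ_of_ne_zero (Nat.ne_zero_of_lt hKn)
  have hKp : K ≤ p := by omega
  have hpass : e ≤ a (p + 1) * q ^ (p + 1) := by simpa [hp] using Nat.find_spec hex
  have he : 0 < e := (mul_pos (ha 0) (pow_pos (by linarith) 0)).trans (hlt 0 (Nat.zero_le _))
  calc a l * q ^ l ≤ (3 / 4) ^ (p - l) * e :=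
        mul_pow_le_of_slow_growth ha hq hslow
          (fun k hk => not_le.1 (Nat.find_min hex (by omega))) hpass (hlK.trans hKp)
    _ ≤ (3 / 4) ^ (K - l) * e := by
        gcongr ?_ * e
        exact pow_le_pow_of_le_one (by norm_num) (by norm_num) (by omega)

end FirstPassage

section Frontier

variable {N : ℕ} {s δ R : ℝ} {l K : ℕ} {Ω : Set (Euc N)} {x : Euc N}

lemma div_two_pow_pow_mul (k : ℕ) (r : ℝ) : (r / 2 ^ k) ^ N * (2 ^ N) ^ k = r ^ N := by
  rw [div_pow, pow_right_comm]
  field_simp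

lemma SlowGrowth.ballMass_mul_pow_le [NeZero N] (h : SlowGrowth Ω δ l R) (hΩ : IsOpen Ω)
    (hx : x ∈ Ω) (hR : 0 < R) (hδ : 0 < δ) (hδω : δ ≤ unitBallVolume N) (hlK : l ≤ K)
    (hsparse : ∀ k ≤ K, ballMass Ω x (R / 2 ^ k) * (2 ^ N) ^ k < δ * (R / 2 ^ (l + 2)) ^ N) :
    ballMass Ω x (R / 2 ^ l) * (2 ^ N) ^ l ≤ (3 / 4) ^ (K - l) * (δ * (R / 2 ^ (l + 2)) ^ N) := by
  have hpos : ∀ k, 0 < ballMass Ω x (R / 2 ^ k) := fun k =>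
    ballMass_pos hΩ (subset_closure hx) (by positivity)
  have htwo : (2 : ℝ) ≤ 2 ^ N := le_self_pow₀ one_le_two (NeZero.ne N)
  refine mul_pow_le_of_slow_growth_of_exists (a := fun k => ballMass Ω x (R / 2 ^ k)) hpos htwo
    (fun k hk hdouble => ?_) hsparse ?_ hlK
  · have hr : 0 < R / 2 ^ (k + l + 2) := by positivity
    have h₂ : 2 * (R / 2 ^ (k + l + 2)) = R / 2 ^ (k + l + 1) := by field_simp; ring
    have h₄ : 4 * (R / 2 ^ (k + l + 2)) = R / 2 ^ (k + l) := by field_simp; ring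
    have hl : 2 ^ (l + 2) * (R / 2 ^ (k + l + 2)) = R / 2 ^ k := by field_simp; ring
    have hk' : ballMass Ω x (2 ^ l * (R / 2 ^ (k + l + 2))) < δ * (R / 2 ^ (k + l + 2)) ^ N := by
      refine lt_of_le_of_lt (ballMass_le_ballMass (ρ := R / 2 ^ k) (y := x) ?_)
        (lt_of_mul_lt_mul_right (hk.trans_eq ?_) (by positivity : (0 : ℝ) ≤ (2 ^ N) ^ k))
      · rw [dist_self, add_zero, ← hl]
        gcongr
        · exact one_le_two
        · omega
      · rw [mul_assoc, ← div_two_pow_pow_mul k (R / 2 ^ (l + 2))]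
        ring_nf
    have := h x _ hr (div_le_self hR.le (one_le_pow₀ one_le_two)) hk'
    rw [h₂, h₄] at this
    exact this (hpos _) hdouble
  · obtain ⟨ρ, hρ, hball⟩ := Metric.isOpen_iff.1 hΩ x hx
    obtain ⟨n, hn⟩ := exists_pow_lt_of_lt_one (div_pos hρ hR) (by norm_num : (1 / 2 : ℝ) < 1)
    have hsmall : R / 2 ^ n ≤ ρ := by
      rw [lt_div_iff₀ hR, one_div, inv_pow] at hn
      exact (div_eq_inv_mul R _).trans_le hn.le
    refine ⟨n, ?_⟩
    rw [ballMass_eq_of_ball_subset (by positivity) ((Metric.ball_subset_ball hsmall).trans hball),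
      mul_right_comm, div_two_pow_pow_mul, mul_comm]
    gcongr
    exact div_le_self hR.le (one_le_pow₀ one_le_two)

lemma SlowGrowth.mono {δ' R' : ℝ} (h : SlowGrowth Ω δ l R) (hδ : δ' ≤ δ) (hR : R' ≤ R) :
    SlowGrowth Ω δ' l R' := fun x r hr hr' hsparse =>
  h x r hr (hr'.trans hR) (hsparse.trans_le (by gcongr))

lemma ballMass_mul_pow_lt_of_density_lt {T : ℝ} (hT : 0 < T)
    (hdens : ∀ r ∈ Ioc 0 (2 * T), ballMass Ω x r / r ^ N < δ / (2 ^ (l + 3)) ^ N) (k : ℕ) :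
    ballMass Ω x (2 * (T / 2 ^ k)) * (2 ^ N) ^ k < δ * (T / 2 ^ (l + 2)) ^ N := by
  rw [← mul_div_assoc]
  have hr : 0 < 2 * T / 2 ^ k := by positivity
  have hlt := (div_lt_iff₀ (by positivity)).1
    (hdens _ ⟨hr, div_le_self (by positivity) (one_le_pow₀ one_le_two)⟩)
  refine ((mul_lt_mul_iff_left₀ (by positivity)).2 hlt).trans_eq ?_
  have hT' : T / 2 ^ (l + 2) = 2 * T / 2 ^ (l + 3) := by
    field_simp
    ring
  rw [mul_assoc, div_two_pow_pow_mul, hT', div_pow, div_mul_eq_mul_div, mul_div_assoc]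

/-- Points of `Ω` close to a density-zero point `x` of the closure see a sparse set at many scales,
but keep the fixed mass that `Ω` has around `x` at the coarsest of them. -/
lemma SlowGrowth.not_tendsto_ballMass_div_pow [NeZero N] (h : SlowGrowth Ω δ l R) (hΩ : IsOpen Ω)
    (hx : x ∈ closure Ω) (hR : 0 < R) (hδ : 0 < δ) (hδω : δ ≤ unitBallVolume N) :
    ¬ Tendsto (fun r => ballMass Ω x r / r ^ N) (𝓝[>] 0) (𝓝 0) := by
  intro hlim
  obtain ⟨R₁, hR₁, hdens⟩ := mem_nhdsGT_iff_exists_Ioc_subset.1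
    (hlim.eventually_lt_const (by positivity : 0 < δ / (2 ^ (l + 3)) ^ N))
  obtain ⟨T, hT, hTR, hTR₁⟩ : ∃ T, 0 < T ∧ T ≤ R ∧ 2 * T ≤ R₁ :=
    ⟨min R (R₁ / 2), lt_min hR (half_pos hR₁), min_le_left _ _,
      by linarith [min_le_right R (R₁ / 2)]⟩
  have hsparse := ballMass_mul_pow_lt_of_density_lt hT fun r hr => hdens ⟨hr.1, hr.2.trans hTR₁⟩
  let β := ballMass Ω x (T / 2 ^ (l + 1))
  have hβ : 0 < β * (2 ^ N) ^ l := mul_pos (ballMass_pos hΩ hx (by positivity)) (by positivity)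
  have he : 0 < δ * (T / 2 ^ (l + 2)) ^ N := by positivity
  obtain ⟨j, hj⟩ := exists_pow_lt_of_lt_one (div_pos hβ he) (by norm_num : (3 / 4 : ℝ) < 1)
  obtain ⟨y, hyΩ, hy⟩ := Metric.mem_closure_iff.1 hx (T / 2 ^ (l + j + 1)) (by positivity)
  have hdist : ∀ k ≤ l + j + 1, dist x y ≤ T / 2 ^ k := fun k hk =>
    hy.le.trans (div_le_div_of_nonneg_left hT.le (by positivity) (pow_le_pow_right₀ one_le_two hk))
  have hdecay := (h.mono le_rfl hTR).ballMass_mul_pow_le (K := l + j) hΩ hyΩ hT hδ hδω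
    (Nat.le_add_right _ _) fun k hk => lt_of_le_of_lt (by
      gcongr
      exact ballMass_le_ballMass (by
        rw [dist_comm]
        linarith [hdist k (by omega)])) (hsparse k)
  have hmass : β ≤ ballMass Ω y (T / 2 ^ l) := by
    refine ballMass_le_ballMass ?_
    have : T / 2 ^ l = T / 2 ^ (l + 1) + T / 2 ^ (l + 1) := by field_simp; ring
    linarith [hdist (l + 1) (by omega)]
  rw [Nat.add_sub_cancel_left, ← div_le_iff₀ he] at hdecay
  refine hj.not_ge ((?_ : _ ≤ _).trans hdecay)
  gcongr

theorem HasExtensionProperty.volume_frontier_eq_zero [NeZero N]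
    (hext : HasExtensionProperty N s Ω) (hs : s ∈ Ioo (0 : ℝ) 1) (hΩ : IsOpen Ω) :
    volume (frontier Ω) = 0 := by
  rcases Ω.eq_empty_or_nonempty with rfl | hne
  · simp
  obtain ⟨δ, hδ, l, R, hR, hslow⟩ :=
    hext.exists_slowGrowth hs hΩ.measurableSet (hΩ.measure_pos volume hne).ne'
  have hslow' := hslow.mono (min_le_left δ (unitBallVolume N)) le_rfl
  rw [measure_eq_zero_iff_ae_notMem]
  filter_upwards [ae_tendsto_ballMass_div_pow hΩ.measurableSet] with x hx hfr
  rw [hΩ.frontier_eq] at hfr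
  exact hslow'.not_tendsto_ballMass_div_pow hΩ hfr.1 hR (lt_min hδ unitBallVolume_pos)
    (min_le_right _ _) (hx hfr.2)

end Frontier

section Neumann

variable {N : ℕ} {s δ : ℝ} {Ω B : Set (Euc N)} {u : Euc N → ℝ}

lemma sq_indicator_sub_indicator_le (hδ : 0 < δ)
    (hsep : ∀ y ∈ B, ∀ z ∈ closure Ω, δ ≤ ‖y - z‖) {q : Euc N × Euc N} (hq : q ∈ reg N Ω) :
    (B.indicator (1 : Euc N → ℝ) q.1 - B.indicator 1 q.2) ^ 2 ≤
      min 1 ((‖q.1 - q.2‖ / δ) ^ 2) := by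
  have hfar : ∀ y ∈ B, ∀ z ∈ closure Ω, (1 : ℝ) ≤ (‖y - z‖ / δ) ^ 2 := fun y hy z hz =>
    one_le_pow₀ ((one_le_div hδ).2 (hsep y hy z hz))
  have hB : ∀ y ∈ B, y ∉ closure Ω := fun y hy hyΩ =>
    (hsep y hy y hyΩ).not_gt (by simpa using hδ)
  have hmin : 0 ≤ min 1 ((‖q.1 - q.2‖ / δ) ^ 2) := by positivity
  by_cases h₁ : q.1 ∈ B <;> by_cases h₂ : q.2 ∈ B
  · simpa [h₁, h₂] using hmin
  · simpa [h₁, h₂] using hfar _ h₁ _ (hq.resolve_left (hB _ h₁))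
  · rw [norm_sub_rev]
    simpa [h₁, h₂] using hfar _ h₂ _ (hq.resolve_right (hB _ h₂))
  · simpa [h₁, h₂] using hmin

lemma memLp_pairDiff_indicator [NeZero N] (hs : s ∈ Ioo (0 : ℝ) 1) (hB : MeasurableSet B)
    (hBfin : volume B ≠ ⊤) (hδ : 0 < δ) (hsep : ∀ y ∈ B, ∀ z ∈ closure Ω, δ ≤ ‖y - z‖) :
    MemLp (pairDiff (B.indicator 1)) 2 ((kernMeasure N s).restrict (reg N Ω)) := by
  rw [memLp_two_iff_lintegral_sq_lt_top
    (measurable_pairDiff (measurable_one.indicator hB)).aestronglyMeasurable, ← eLpNorm_two_sq,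
    ← setLIntegral_sq_div_kern]
  refine (setLIntegral_sq_div_kern_le (S := univ) (r := δ) hB (by simp)
    (fun q hq => sq_indicator_sub_indicator_le hδ hsep hq) (fun y hy => indicator_of_notMem hy _)
    (M := ∫⁻ v, ENNReal.ofReal (truncKernel N s δ v)) fun y _ => ?_).trans_lt ?_
  · rw [Measure.restrict_univ,
      lintegral_sub_left_eq_self (fun v => ENNReal.ofReal (truncKernel N s δ v)) y]
  · rw [univ_inter]
    exact ENNReal.mul_lt_top ENNReal.ofNat_lt_top
      (ENNReal.mul_lt_top (integrable_truncKernel hs δ).lintegral_lt_top hBfin.lt_top)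

lemma setIntegral_reg_of_swap_eq {g : Euc N × Euc N → ℝ} (hB : MeasurableSet B)
    (hBΩ : Disjoint B (closure Ω)) (hg : IntegrableOn g (reg N Ω)) (hswap : ∀ q, g q.swap = g q)
    (hg₀ : ∀ q, q.1 ∉ B → q.2 ∉ B → g q = 0) :
    ∫ q in reg N Ω, g q = 2 * ∫ q in B ×ˢ closure Ω, g q := by
  have hK : MeasurableSet (closure Ω) := isClosed_closure.measurableSet
  have hBK : B ×ˢ closure Ω ⊆ reg N Ω := fun _ hq => Or.inr hq.2
  have hKB : closure Ω ×ˢ B ⊆ reg N Ω := fun _ hq => Or.inl hq.1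
  have hdisj : Disjoint (B ×ˢ closure Ω) (closure Ω ×ˢ B) := Disjoint.set_prod_left hBΩ _ _
  have hsupp : ∫ q in B ×ˢ closure Ω ∪ closure Ω ×ˢ B, g q = ∫ q in reg N Ω, g q := by
    refine (setIntegral_eq_of_subset_of_forall_sdiff_eq_zero (measurableSet_reg Ω)
      (union_subset hBK hKB) fun q ⟨hq, hq'⟩ => hg₀ q (fun h => ?_) fun h => ?_).symm
    · exact hq' (Or.inl ⟨h, hq.resolve_left (hBΩ.notMem_of_mem_left h)⟩)
    · exact hq' (Or.inr ⟨hq.resolve_right (hBΩ.notMem_of_mem_left h), h⟩)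
  have hsymm : ∫ q in closure Ω ×ˢ B, g q = ∫ q in B ×ˢ closure Ω, g q := by
    rw [Measure.volume_eq_prod, ← setIntegral_prod_swap B (closure Ω) g]
    simp only [hswap]
  rw [← hsupp, setIntegral_union hdisj (hK.prod hB) (hg.mono_set hBK) (hg.mono_set hKB), hsymm,
    two_mul]

/-- The test function is the indicator of `B`. -/
lemma IsHarmonicOff.setIntegral_div_kern_eq_zero [NeZero N]
    (h : IsHarmonicOff (volume.restrict Ω) ((kernMeasure N s).restrict (reg N Ω)) u)
    (hs : s ∈ Ioo (0 : ℝ) 1) (hdu : MemLp (pairDiff u) 2 ((kernMeasure N s).restrict (reg N Ω)))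
    (hB : MeasurableSet B) (hBfin : volume B ≠ ⊤) (hδ : 0 < δ)
    (hsep : ∀ y ∈ B, ∀ z ∈ closure Ω, δ ≤ ‖y - z‖) :
    IntegrableOn (fun q => (u q.1 - u q.2) / kern N s q.1 q.2) (B ×ˢ closure Ω) ∧
      ∫ q in B ×ˢ closure Ω, (u q.1 - u q.2) / kern N s q.1 q.2 = 0 := by
  have hBΩ : Disjoint B (closure Ω) := disjoint_left.2 fun y hy hyΩ =>
    (hsep y hy y hyΩ).not_gt (by simpa using hδ)
  have hK : MeasurableSet (B ×ˢ closure Ω) := hB.prod isClosed_closure.measurableSet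
  let ψ : Euc N → ℝ := B.indicator 1
  have hψ : MemLp (pairDiff ψ) 2 ((kernMeasure N s).restrict (reg N Ω)) :=
    memLp_pairDiff_indicator hs hB hBfin hδ hsep
  have hψΩ : ψ =ᵐ[volume.restrict Ω] 0 := by
    refine ae_restrict_of_ae_restrict_of_subset subset_closure ?_
    filter_upwards [ae_restrict_mem isClosed_closure.measurableSet] with y hy
    exact indicator_of_notMem (hBΩ.notMem_of_mem_right hy) _
  let g : Euc N × Euc N → ℝ := fun q => pairDiff u q * pairDiff ψ q / kern N s q.1 q.2
  have hg : IntegrableOn g (reg N Ω) := integrableOn_kernMeasure_iff.1 (hdu.integrable_mul hψ)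
  have hgu : EqOn g (fun q => (u q.1 - u q.2) / kern N s q.1 q.2) (B ×ˢ closure Ω) := by
    intro q hq
    simp [g, ψ, pairDiff_apply, hq.1, hBΩ.notMem_of_mem_right hq.2]
  have hdouble := setIntegral_reg_of_swap_eq hB hBΩ hg
    (fun q => by simp only [g, pairDiff_apply, Prod.fst_swap, Prod.snd_swap, kern_comm q.2]; ring)
    (fun q h₁ h₂ => by simp [g, ψ, pairDiff_apply, h₁, h₂])
  have hzero : ∫ q in reg N Ω, g q = 0 := by
    rw [← setIntegral_kernMeasure (measurableSet_reg Ω)]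
    exact h ψ (measurable_one.indicator hB) hψΩ hψ
  refine ⟨(hg.mono_set fun q hq => Or.inr hq.2).congr_fun hgu hK, ?_⟩
  rw [← setIntegral_congr_fun hK hgu]
  linarith

lemma IsHarmonicOff.ae_restrict_Nneu_eq_zero [NeZero N]
    (h : IsHarmonicOff (volume.restrict Ω) ((kernMeasure N s).restrict (reg N Ω)) u)
    (hs : s ∈ Ioo (0 : ℝ) 1) (hdu : MemLp (pairDiff u) 2 ((kernMeasure N s).restrict (reg N Ω)))
    (hfr : volume (frontier Ω) = 0) (hB : MeasurableSet B) (hBfin : volume B ≠ ⊤) (hδ : 0 < δ)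
    (hsep : ∀ y ∈ B, ∀ z ∈ closure Ω, δ ≤ ‖y - z‖) :
    ∀ᵐ x ∂volume.restrict B, Nneu N s Ω u x = 0 := by
  have hΩ : (volume : Measure (Euc N)).restrict (closure Ω) = volume.restrict Ω :=
    Measure.restrict_congr_set (closure_ae_eq_of_null_frontier hfr)
  have hflux : ∀ T : Set (Euc N), MeasurableSet T → T ⊆ B →
      Integrable (fun q : Euc N × Euc N => (u q.1 - u q.2) / kern N s q.1 q.2)
        ((volume.restrict T).prod (volume.restrict Ω)) ∧
      ∫ x in T, ∫ y in Ω, (u x - u y) / kern N s x y = 0 := by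
    intro T hT hTB
    have hflux := h.setIntegral_div_kern_eq_zero hs hdu hT (measure_ne_top_of_subset hTB hBfin) hδ
      fun y hy => hsep y (hTB hy)
    rw [IntegrableOn, Measure.volume_eq_prod, ← Measure.prod_restrict, hΩ] at hflux
    exact ⟨hflux.1, (integral_prod _ hflux.1).symm.trans hflux.2⟩
  have hint := (hflux B hB subset_rfl).1.integral_prod_left
  have hzero := hint.ae_eq_zero_of_forall_setIntegral_eq_zero fun T hT _ => by
    rw [Measure.restrict_restrict hT]
    exact (hflux (T ∩ B) (hT.inter hB) inter_subset_right).2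
  filter_upwards [hzero] with x hx
  rw [Nneu, hx, Pi.zero_apply, mul_zero]

theorem IsHarmonicOff.ae_Nneu_eq_zero [NeZero N]
    (h : IsHarmonicOff (volume.restrict Ω) ((kernMeasure N s).restrict (reg N Ω)) u)
    (hs : s ∈ Ioo (0 : ℝ) 1) (hdu : MemLp (pairDiff u) 2 ((kernMeasure N s).restrict (reg N Ω)))
    (hfr : volume (frontier Ω) = 0) (hne : Ω.Nonempty) :
    ∀ᵐ x ∂volume.restrict (closure Ω)ᶜ, Nneu N s Ω u x = 0 := by
  let B : ℕ → ℕ → Set (Euc N) := fun m n =>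
    {x | 1 / ((m : ℝ) + 1) < Metric.infDist x (closure Ω)} ∩ Metric.ball 0 n
  have hcover : (closure Ω)ᶜ ⊆ ⋃ m, ⋃ n, B m n := by
    intro x hx
    obtain ⟨m, hm⟩ := exists_nat_one_div_lt
      ((isClosed_closure.notMem_iff_infDist_pos hne.closure).1 hx)
    obtain ⟨n, hn⟩ := exists_nat_gt ‖x‖
    exact mem_iUnion₂.2 ⟨m, n, hm, mem_ball_zero_iff.2 hn⟩
  refine ae_restrict_of_ae_restrict_of_subset hcover ?_
  simp only [ae_restrict_iUnion_iff]
  intro m n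
  refine h.ae_restrict_Nneu_eq_zero hs hdu hfr ?_ ?_ (δ := 1 / ((m : ℝ) + 1)) (by positivity) ?_
  · exact (measurableSet_lt measurable_const (Metric.continuous_infDist_pt _).measurable).inter
      Metric.isOpen_ball.measurableSet
  · exact measure_ne_top_of_subset inter_subset_right Metric.isBounded_ball.measure_lt_top.ne
  · intro x hx y hy
    rw [← dist_eq_norm]
    exact hx.1.le.trans (Metric.infDist_le_dist_of_mem hy)

end Neumann

section MinimalExtension

variable {N : ℕ} {s : ℝ} {Ω : Set (Euc N)} {u v w : Euc N → ℝ}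

lemma IsHarmonicOff.semiSq_eq_add
    (h : IsHarmonicOff (volume.restrict Ω) ((kernMeasure N s).restrict (reg N Ω)) u)
    (hu : memHs N s Ω u) (hv : memHs N s Ω v) (huv : v =ᵐ[volume.restrict Ω] u) :
    semiSq N s Ω v = semiSq N s Ω u + semiSq N s Ω (v - u) := by
  simp only [semiSq_eq_eLpNorm_sq]
  exact h.eLpNorm_pairDiff_sq hu.1 hv.1 (memHs_iff.1 hu).2.2 (memHs_iff.1 hv).2.2 huv

lemma ae_eq_of_semiSq_sub_eq_zero [NeZero N] (hΩ : volume Ω ≠ 0) (hu : Measurable u)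
    (hv : Measurable v) (huv : v =ᵐ[volume.restrict Ω] u) (h : semiSq N s Ω (v - u) = 0) :
    v =ᵐ[volume] u := by
  have : NeZero (volume.restrict Ω) := ⟨by rwa [Ne, Measure.restrict_eq_zero]⟩
  rw [semiSq_eq_eLpNorm_sq, pow_eq_zero_iff two_ne_zero,
    eLpNorm_eq_zero_iff (measurable_pairDiff (hv.sub hu)).aestronglyMeasurable two_ne_zero,
    map_sub] at h
  exact diffCompatible_reg.ae_eq_of_pairDiff_ae_eq huv ((sub_ae_eq_zero _ _).1 h)

lemma IsHarmonicOff.ae_eq_of_semiSq_le [NeZero N]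
    (h : IsHarmonicOff (volume.restrict Ω) ((kernMeasure N s).restrict (reg N Ω)) u)
    (hΩ : volume Ω ≠ 0) (hu : memHs N s Ω u) (hw : memHs N s Ω w)
    (huw : w =ᵐ[volume.restrict Ω] u) (hle : semiSq N s Ω w ≤ semiSq N s Ω u) :
    w =ᵐ[volume] u := by
  refine ae_eq_of_semiSq_sub_eq_zero (s := s) hΩ hu.1 hw.1 huw (le_zero_iff.1 ?_)
  rw [h.semiSq_eq_add hu hw huw] at hle
  exact (ENNReal.add_le_add_iff_left hu.2.2.ne).1 (hle.trans (add_zero _).ge)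

lemma exists_memHs_isHarmonicOff [NeZero N] (hΩ : volume Ω ≠ 0) (hu : memHs N s Ω u) :
    ∃ v, memHs N s Ω v ∧ v =ᵐ[volume.restrict Ω] u ∧
      IsHarmonicOff (volume.restrict Ω) ((kernMeasure N s).restrict (reg N Ω)) v := by
  have : NeZero (volume.restrict Ω) := ⟨by rwa [Ne, Measure.restrict_eq_zero]⟩
  obtain ⟨hu, hL, hd⟩ := memHs_iff.1 hu
  obtain ⟨v, hv, hvu, hdv, hharm⟩ := exists_isHarmonicOff diffCompatible_reg hu hd
  exact ⟨v, memHs_iff.2 ⟨hv, (memLp_congr_ae hvu).2 hL, hdv⟩, hvu, hharm⟩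

end MinimalExtension

theorem statement2_general {N : ℕ} [NeZero N] {s : ℝ} (hs : s ∈ Ioo (0 : ℝ) 1)
    {Ω : Set (Euc N)} (hopen : IsOpen Ω) (hne : Ω.Nonempty)
    (hext : HasExtensionProperty N s Ω) (u : Euc N → ℝ) (hu : memHsOn N s Ω u) :
    ∃ ue : Euc N → ℝ, memHs N s Ω ue ∧ ue =ᵐ[volume.restrict Ω] u ∧
      (∀ v : Euc N → ℝ, memHs N s Ω v → v =ᵐ[volume.restrict Ω] u →
        semiSq N s Ω ue ≤ semiSq N s Ω v) ∧
      (∀ᵐ x ∂(volume.restrict (closure Ω)ᶜ), Nneu N s Ω ue x = 0) ∧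
      (∀ w : Euc N → ℝ, memHs N s Ω w → w =ᵐ[volume.restrict Ω] u →
        (∀ v : Euc N → ℝ, memHs N s Ω v → v =ᵐ[volume.restrict Ω] u →
          semiSq N s Ω w ≤ semiSq N s Ω v) →
        w =ᵐ[(volume : Measure (Euc N))] ue) := by
  have hΩ : volume Ω ≠ 0 := (hopen.measure_pos volume hne).ne'
  have hfr : volume (frontier Ω) = 0 := hext.volume_frontier_eq_zero hs hopen
  obtain ⟨U, hU, hUu⟩ := hext u hu
  obtain ⟨V, hV, hVU, hharm⟩ := exists_memHs_isHarmonicOff hΩ hU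
  have hVu : V =ᵐ[volume.restrict Ω] u := hVU.trans hUu
  refine ⟨V, hV, hVu, fun v hv hvu => ?_,
    hharm.ae_Nneu_eq_zero hs (memHs_iff.1 hV).2.2 hfr hne, fun w hw hwu hmin => ?_⟩
  · rw [hharm.semiSq_eq_add hV hv (hvu.trans hVu.symm)]
    exact le_self_add
  · exact hharm.ae_eq_of_semiSq_le hΩ hV hw (hwu.trans hVu.symm) (hmin V hV hVu)

/-- Proposition 2.2: existence, minimality, uniqueness of the `s`-minimal
extension, and vanishing of its nonlocal Neumann derivative. The Lipschitz regularity of the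
bounded domain `Ω` enters only through the extension property `hext`. -/
theorem statement2 (N : ℕ) (hN : 2 ≤ N) (s : ℝ) (hs : s ∈ Set.Ioo (0 : ℝ) 1)
    (Ω : Set (Euc N)) (hopen : IsOpen Ω) (hbd : IsBounded Ω) (hconn : IsConnected Ω)
    (hext : ∀ u : Euc N → ℝ, memHsOn N s Ω u →
      ∃ U : Euc N → ℝ, memHs N s Ω U ∧ U =ᵐ[volume.restrict Ω] u) :
    ∀ u : Euc N → ℝ, memHsOn N s Ω u →
      ∃ ue : Euc N → ℝ, memHs N s Ω ue ∧ ue =ᵐ[volume.restrict Ω] u ∧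
        (∀ v : Euc N → ℝ, memHs N s Ω v → v =ᵐ[volume.restrict Ω] u →
          semiSq N s Ω ue ≤ semiSq N s Ω v) ∧
        (∀ᵐ x ∂(volume.restrict (closure Ω)ᶜ), Nneu N s Ω ue x = 0) ∧
        (∀ w : Euc N → ℝ, memHs N s Ω w → w =ᵐ[volume.restrict Ω] u →
          (∀ v : Euc N → ℝ, memHs N s Ω v → v =ᵐ[volume.restrict Ω] u →
            semiSq N s Ω w ≤ semiSq N s Ω v) →
          w =ᵐ[(volume : Measure (Euc N))] ue) := by
  have : NeZero N := ⟨by lia⟩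
  exact statement2_general hs hopen hconn.nonempty hext

end FracNeumann
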